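/- Let (C, D) be an out-j collapsible pair with D nonempty. Then D is contractible if and only if D is collapsible, and both are equivalent to the existence of an out-j collapsing sequence for (C,D) with no outwardly matched faces. -/

import Mathlib

/-- An abstract (finite, graded) face poset carrying a dimension function and a
codimension-one face ("facet") relation, modelling the combinatorics of a
finite regular CW complex. -/
structure MorseSetup (F : Type) where
  dim : F → ℕ
  facet : F → F → Prop
  facet_dim : ∀ σ τ, facet σ τ → dim τ = dim σ + 1

/-- A discrete vector field: pairs `(σ, Σ)` with `σ` a codimension-one face of `Σ`,
no face belonging to two different pairs. -/
def IsDVF {F : Type} (S : MorseSetup F) (Φ : Finset (F × F)) : Prop :=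
  (∀ p ∈ Φ, S.facet p.1 p.2) ∧
  ∀ p ∈ Φ, ∀ q ∈ Φ, p ≠ q → p.1 ≠ q.1 ∧ p.1 ≠ q.2 ∧ p.2 ≠ q.1 ∧ p.2 ≠ q.2

/-- Existence of a closed gradient path `(σ_0,Σ_0),…,(σ_k,Σ_k)`, `k ≥ 1`,
with `σ_{i+1} ≠ σ_i`, `σ_{i+1}` a facet of `Σ_i` and `σ_0 = σ_k`. -/
def HasClosedGradientPath {F : Type} (S : MorseSetup F) (Φ : Finset (F × F)) : Prop :=
  ∃ (k : ℕ) (σ T : ℕ → F), 1 ≤ k ∧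
    (∀ i ≤ k, (σ i, T i) ∈ Φ) ∧
    (∀ i < k, σ (i + 1) ≠ σ i ∧ S.facet (σ (i + 1)) (T i)) ∧
    σ 0 = σ k

/-- A Morse matching is a discrete vector field without closed gradient paths. -/
def IsMorseMatching {F : Type} (S : MorseSetup F) (Φ : Finset (F × F)) : Prop :=
  IsDVF S Φ ∧ ¬ HasClosedGradientPath S Φ

/-- A face is critical if it belongs to no matching pair. -/
def IsCritical {F : Type} (Φ : Finset (F × F)) (x : F) : Prop :=
  ∀ p ∈ Φ, x ≠ p.1 ∧ x ≠ p.2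

/-- A face `τ` of the subcomplex `D` is outwardly matched if it is matched with
a face not belonging to `D`. -/
def OutwardlyMatched {F : Type} (Φ : Finset (F × F)) (D : Finset F) (τ : F) : Prop :=
  τ ∈ D ∧ ∃ p ∈ Φ, (p.1 = τ ∧ p.2 ∉ D) ∨ (p.2 = τ ∧ p.1 ∉ D)

/-- A collapsing sequence from the whole complex to the vertex `v`: a Morse matching
whose unique critical face is the vertex `v`. -/
def IsCollapsingSeq {F : Type} (S : MorseSetup F) (Φ : Finset (F × F)) (v : F) : Prop :=
  IsMorseMatching S Φ ∧ S.dim v = 0 ∧ ∀ x, IsCritical Φ x ↔ x = v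

/-- `(C, D)` is out-`j` collapsible via `Φ`: `Φ` is a collapsing sequence from `C`
to a vertex of `D` in which every outwardly matched face has dimension `j`. -/
def IsOutJCollapsingSeq {F : Type} (S : MorseSetup F) (Φ : Finset (F × F))
    (D : Finset F) (j : ℕ) : Prop :=
  (∃ v ∈ D, IsCollapsingSeq S Φ v) ∧ ∀ τ, OutwardlyMatched Φ D τ → S.dim τ = j

/-- `D` is a subcomplex: closed under passing to codimension-one faces. -/
def IsSubcomplex {F : Type} (S : MorseSetup F) (D : Finset F) : Prop :=
  ∀ σ τ, S.facet σ τ → τ ∈ D → σ ∈ D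

open Metric in
/-- A (finite) regular CW structure on the topological space `X`, with faces indexed by `F`:
each face has a characteristic map from a closed ball which is a continuous injection
(regularity), open cells are pairwise disjoint and cover `X`, and the boundary of each cell
lies in the union of the closed cells of lower dimension. -/
structure RegularCW (F : Type) [Fintype F] (X : Type) [TopologicalSpace X] where
  dim : F → ℕ
  charMap : (f : F) → (closedBall (0 : EuclideanSpace ℝ (Fin (dim f))) 1) → X
  continuous_charMap : ∀ f, Continuous (charMap f)
  injective_charMap : ∀ f, Function.Injective (charMap f)
  disjoint_openCells : ∀ f g, f ≠ g →
    Disjoint (charMap f '' {x | ‖(x : EuclideanSpace ℝ (Fin (dim f)))‖ < 1})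
      (charMap g '' {x | ‖(x : EuclideanSpace ℝ (Fin (dim g)))‖ < 1})
  cover : (⋃ f, Set.range (charMap f)) = Set.univ
  boundary : ∀ f, charMap f '' {x | ‖(x : EuclideanSpace ℝ (Fin (dim f)))‖ = 1} ⊆
    ⋃ g ∈ {g | dim g < dim f}, Set.range (charMap g)

/-- The closed cell of the face `f`. -/
def RegularCW.cell {F X : Type} [Fintype F] [TopologicalSpace X]
    (C : RegularCW F X) (f : F) : Set X :=
  Set.range (C.charMap f)

/-- The face structure underlying a regular CW complex: `σ` is a codimension-one face of
`τ` if the closed cell of `σ` is contained in that of `τ` and dimensions differ by one. -/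
def RegularCW.toSetup {F X : Type} [Fintype F] [TopologicalSpace X]
    (C : RegularCW F X) : MorseSetup F where
  dim := C.dim
  facet := fun σ τ => σ ≠ τ ∧ C.cell σ ⊆ C.cell τ ∧ C.dim τ = C.dim σ + 1
  facet_dim := fun _ _ h => h.2.2

/-- `D` is a subcomplex of the regular CW complex: it is closed under taking faces. -/
def RegularCW.Subcomplex {F X : Type} [Fintype F] [TopologicalSpace X]
    (C : RegularCW F X) (D : Finset F) : Prop :=
  ∀ σ τ, C.cell σ ⊆ C.cell τ → τ ∈ D → σ ∈ D

/-- The geometric realization (underlying point set) of the subcomplex `D`. -/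
def RegularCW.real {F X : Type} [Fintype F] [TopologicalSpace X]
    (C : RegularCW F X) (D : Finset F) : Set X :=
  ⋃ f ∈ D, C.cell f

/-- A collapsing sequence of the subcomplex `D` onto a vertex `v ∈ D`: a Morse matching
all of whose pairs consist of faces of `D`, whose unique critical face in `D` is `v`. -/
def IsCollapsingSeqOn {F : Type} (S : MorseSetup F) (Φ : Finset (F × F))
    (D : Finset F) (v : F) : Prop :=
  IsMorseMatching S Φ ∧ v ∈ D ∧ S.dim v = 0 ∧
    (∀ p ∈ Φ, p.1 ∈ D ∧ p.2 ∈ D) ∧ ∀ x ∈ D, (IsCritical Φ x ↔ x = v)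

section Helpers
open Metric Set MeasureTheory Module

theorem det_interp {E : Type*} [NormedAddCommGroup E] [NormedSpace ℝ E] [FiniteDimensional ℝ E]
    (t : ℕ → ℝ) (ht : Function.Injective t) :
    ∃ l : ℕ → ℝ, ∑ i ∈ Finset.range (finrank ℝ E + 1), l i = 1 ∧
      ∀ A : E →L[ℝ] E, (ContinuousLinearMap.id ℝ E + A).det =
        ∑ i ∈ Finset.range (finrank ℝ E + 1), l i * (ContinuousLinearMap.id ℝ E + t i • A).det := by
  classical
  let s := Finset.range (finrank ℝ E + 1)
  refine ⟨fun i => (Lagrange.basis s t i).eval 1, ?_, ?_⟩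
  · rw [← Polynomial.eval_finsetSum, Lagrange.sum_basis ht.injOn (by simp [s])]
    simp
  · intro A
    let b := Module.finBasis ℝ E
    let M := LinearMap.toMatrix b b (A : E →ₗ[ℝ] E)
    let P : Polynomial ℝ := Matrix.det ((Polynomial.X : Polynomial ℝ) • M.map Polynomial.C + (1 : Matrix _ _ ℝ).map Polynomial.C)
    have hP : ∀ x : ℝ, P.eval x = (ContinuousLinearMap.id ℝ E + x • A).det := by
      intro x
      have h1 : P.eval x = Matrix.det (1 + x • M) := by
        simp only [P]
        rw [← Polynomial.coe_evalRingHom, RingHom.map_det]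
        congr 1
        ext i j
        simp [Matrix.one_apply]
        split_ifs <;> simp [add_comm, mul_comm]
      rw [h1]
      have h2 : (1 + x • M) = LinearMap.toMatrix b b ((ContinuousLinearMap.id ℝ E + x • A : E →L[ℝ] E) : E →ₗ[ℝ] E) := by
        simp [M, map_add, map_smul]
      rw [h2, LinearMap.det_toMatrix]

    have hdeg : P.degree < (s.card : WithBot ℕ) := by
      refine lt_of_le_of_lt Polynomial.degree_le_natDegree ?_
      have := Polynomial.natDegree_det_X_add_C_le M 1
      simp only [Fintype.card_fin] at this
      simp only [s, Finset.card_range]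
      exact_mod_cast Nat.lt_succ_of_le this
    have := Lagrange.eq_interpolate (s := s) (v := t) ht.injOn hdeg
    have h3 := congrArg (Polynomial.eval 1) this
    rw [hP, Lagrange.interpolate_apply, Polynomial.eval_finsetSum] at h3
    simp only [one_smul, Polynomial.eval_mul, Polynomial.eval_C, hP] at h3
    rw [h3]
    exact Finset.sum_congr rfl fun i _ => mul_comm _ _

theorem lip_ext {E : Type*} [NormedAddCommGroup E] [NormedSpace ℝ E] (g : E → E) (K : NNReal)
    (hg : LipschitzOnWith K g (closedBall 0 1)) (h0 : ∀ x, ‖x‖ = 1 → g x = 0) (h1 : ∀ x, 1 < ‖x‖ → g x = 0) :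
    LipschitzWith K g := by
  have key : ∀ x y : E, ‖x‖ ≤ 1 → 1 < ‖y‖ → dist (g x) (g y) ≤ K * dist x y := by
    intro x y hx hy
    have : (1:ℝ) ∈ (fun s : ℝ => ‖AffineMap.lineMap x y s‖) '' Icc 0 1 := by
      apply intermediate_value_Icc zero_le_one
      · apply Continuous.continuousOn
        exact (AffineMap.lineMap_continuous (R := ℝ) (p := x) (q := y)).norm
      · simp [hx, hy.le]
    obtain ⟨s, hs, hz⟩ := this
    simp only at hz
    set z := AffineMap.lineMap x y s with hzd
    rw [h1 y hy, ← h0 z hz]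
    calc dist (g x) (g z) ≤ K * dist x z := hg.dist_le_mul x (by simpa using hx) z (by simp [hz])
      _ ≤ K * dist x y := by
        gcongr
        rw [hzd, dist_left_lineMap]
        rw [Real.norm_of_nonneg hs.1]
        exact mul_le_of_le_one_left dist_nonneg hs.2
  apply LipschitzWith.of_dist_le_mul
  intro x y
  rcases le_or_gt ‖x‖ 1 with hx | hx <;> rcases le_or_gt ‖y‖ 1 with hy | hy
  · exact hg.dist_le_mul x (by simpa using hx) y (by simpa using hy)
  · exact key x y hx hy
  · rw [dist_comm, dist_comm x]; exact key y x hy hx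
  · rw [h1 x hx, h1 y hy]; simp; positivity


theorem det_pos_of_small {E : Type*} [NormedAddCommGroup E] [NormedSpace ℝ E] [FiniteDimensional ℝ E]
    (A : E →L[ℝ] E) (hA : ‖A‖ < 1) : 0 < (ContinuousLinearMap.id ℝ E + A).det := by
  have hne : ∀ s ∈ Icc (0:ℝ) 1, (ContinuousLinearMap.id ℝ E + s • A).det ≠ 0 := by
    intro s hs h0
    have h1 := LinearMap.bot_lt_ker_of_det_eq_zero (f := ((ContinuousLinearMap.id ℝ E + s • A : E →L[ℝ] E) : E →ₗ[ℝ] E)) h0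
    obtain ⟨v, hv, hv0⟩ := Submodule.exists_mem_ne_zero_of_ne_bot h1.ne'
    have hv' : v + s • A v = 0 := by simpa using hv
    have h2 : ‖v‖ = ‖s • A v‖ := by
      conv_lhs => rw [eq_neg_of_add_eq_zero_left hv', norm_neg]
    have h3 : ‖s • A v‖ ≤ ‖A‖ * ‖v‖ := by
      rw [norm_smul, Real.norm_of_nonneg hs.1]
      calc s * ‖A v‖ ≤ 1 * ‖A v‖ := by gcongr; exact hs.2
        _ ≤ _ := by rw [one_mul]; exact A.le_opNorm v
    have h4 : 0 < ‖v‖ := norm_pos_iff.2 hv0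
    nlinarith
  by_contra hcon
  push Not at hcon
  have hcont : Continuous (fun s : ℝ => (ContinuousLinearMap.id ℝ E + s • A).det) := by
    apply ContinuousLinearMap.continuous_det.comp
    fun_prop
  have : (0:ℝ) ∈ (fun s : ℝ => (ContinuousLinearMap.id ℝ E + s • A).det) '' Icc 0 1 := by
    apply intermediate_value_Icc' zero_le_one hcont.continuousOn
    constructor
    · simpa using hcon
    · simp [ContinuousLinearMap.det]
  obtain ⟨s, hs, h⟩ := this
  exact hne s hs h

theorem no_C1_retraction {E : Type*} [NormedAddCommGroup E] [InnerProductSpace ℝ E] [FiniteDimensional ℝ E]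
    (r : E → E) (hr : ContDiff ℝ 1 r) (h1 : ∀ x, ‖r x‖ = 1) (h2 : ∀ x, ‖x‖ = 1 → r x = x) : False := by
  let _ : MeasurableSpace E := borel E
  have : BorelSpace E := ⟨rfl⟩
  let μ : Measure E := Measure.addHaar
  have hrd : Differentiable ℝ r := hr.differentiable (by norm_num)
  have hdet0 : ∀ x, (fderiv ℝ r x).det = 0 := by
    intro x
    by_contra hne
    have h3 : ∀ v, inner ℝ (r x) (fderiv ℝ r x v) = 0 := by
      intro v
      have h4 : HasFDerivAt (fun y => inner ℝ (r y) (r y)) _ x :=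
        (hrd x).hasFDerivAt.inner ℝ (hrd x).hasFDerivAt
      have h5 : (fun y => inner ℝ (r y) (r y)) = fun _ => (1:ℝ) := by
        ext y; rw [real_inner_self_eq_norm_sq, h1]; norm_num
      rw [h5] at h4
      have h6 := h4.unique (hasFDerivAt_const (1:ℝ) x)
      have h7 := congrArg (fun L => L v) h6
      simp [real_inner_comm] at h7
      first | linarith | (rw [real_inner_comm] at h7; linarith)
    have hsurj : Function.Surjective (fderiv ℝ r x) := by
      let e := LinearEquiv.ofIsUnitDet (f := ((fderiv ℝ r x : E →L[ℝ] E) : E →ₗ[ℝ] E)) (v := finBasis ℝ E) (v' := finBasis ℝ E)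
        (by rw [LinearMap.det_toMatrix]; exact isUnit_iff_ne_zero.2 hne)
      exact e.surjective
    obtain ⟨v, hv⟩ := hsurj (r x)
    have := h3 v
    rw [hv, real_inner_self_eq_norm_sq, h1] at this
    norm_num at this
  let g : E → E := fun x => if ‖x‖ ≤ 1 then r x - x else 0
  have hdiff : ContDiff ℝ 1 (fun x => r x - x) := hr.sub contDiff_id
  obtain ⟨K, hK⟩ : ∃ K, LipschitzOnWith K (fun x => r x - x) (closedBall (0:E) 1) :=
    hdiff.contDiffOn.exists_lipschitzOnWith (by norm_num) (convex_closedBall _ _) (isCompact_closedBall _ _)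
  have hg : LipschitzWith K g := by
    apply lip_ext
    · intro x hx y hy
      have := hK hx hy
      simp only [mem_closedBall, dist_zero_right] at hx hy
      simpa [g, hx, hy] using this
    · intro x hx; simp [g, hx, h2 x hx]
    · intro x hx; simp [g, not_le.2 hx]
  have hgz : ∀ x, x ∉ ball (0:E) 1 → g x = 0 := by
    intro x hx
    simp only [mem_ball, dist_zero_right, not_lt] at hx
    rcases hx.eq_or_lt with h | h
    · simp [g, ← h, h2 x h.symm]
    · simp [g, not_le.2 h]
  let A : E → E →L[ℝ] E := fun x => fderiv ℝ r x - ContinuousLinearMap.id ℝ E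
  have hAcont : Continuous A := (hr.continuous_fderiv (by norm_num)).sub continuous_const
  have hA : ∀ x ∈ ball (0:E) 1, HasFDerivAt g (A x) x := by
    intro x hx
    have : HasFDerivAt (fun x => r x - x) (A x) x := (hrd x).hasFDerivAt.sub (hasFDerivAt_id x)
    apply this.congr_of_eventuallyEq
    filter_upwards [isOpen_ball.mem_nhds hx] with y hy
    have : ‖y‖ ≤ 1 := by
      simpa using (mem_ball.1 hy).le
    simp [g, this]
  have hAn : ∀ x ∈ ball (0:E) 1, ‖A x‖ ≤ K := by
    intro x hx
    rw [← (hA x hx).fderiv]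
    exact norm_fderiv_le_of_lipschitz ℝ hg
  have hIntg : ∀ t : ℝ, IntegrableOn (fun x => (ContinuousLinearMap.id ℝ E + t • A x).det) (ball 0 1) μ := by
    intro t
    have : Continuous (fun x => (ContinuousLinearMap.id ℝ E + t • A x).det) :=
      ContinuousLinearMap.continuous_det.comp (by fun_prop)
    exact (this.continuousOn.integrableOn_compact (isCompact_closedBall 0 1)).mono_set ball_subset_closedBall
  have key : ∀ t : ℝ, 0 < t → t * K < 1 →
      ∫ x in ball (0:E) 1, (ContinuousLinearMap.id ℝ E + t • A x).det ∂μ = μ.real (ball 0 1) := by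
    intro t ht htK
    let f : E → E := fun x => x + t • g x
    have hap : ApproximatesLinearOn f ((ContinuousLinearEquiv.refl ℝ E : E ≃L[ℝ] E) : E →L[ℝ] E) univ (t.toNNReal * K) := by
      intro x _ y _
      have : f x - f y - ((ContinuousLinearEquiv.refl ℝ E : E ≃L[ℝ] E) : E →L[ℝ] E) (x - y) = t • (g x - g y) := by
        simp [f, smul_sub]; abel
      rw [this, norm_smul, Real.norm_of_nonneg ht.le]
      have := hg.dist_le_mul x y
      rw [dist_eq_norm, dist_eq_norm] at this
      push_cast
      rw [Real.coe_toNNReal _ ht.le, mul_assoc]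
      gcongr
    have hsmall : Subsingleton E ∨ (t.toNNReal * K) < ‖(((ContinuousLinearEquiv.refl ℝ E).symm : E ≃L[ℝ] E) : E →L[ℝ] E)‖₊⁻¹ := by
      rcases subsingleton_or_nontrivial E with h | h
      · exact Or.inl h
      · right
        have : ‖(((ContinuousLinearEquiv.refl ℝ E).symm : E ≃L[ℝ] E) : E →L[ℝ] E)‖₊ = 1 := by
          ext; exact ContinuousLinearMap.norm_id
        rw [this, inv_one]
        rw [← NNReal.coe_lt_coe]; push_cast
        rwa [Real.coe_toNNReal _ ht.le]
    have hinj : Function.Injective f := injOn_univ.1 (hap.injOn hsmall)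
    have hsurj : Function.Surjective f := hap.surjective hsmall
    have hfix : ∀ x, x ∉ ball (0:E) 1 → f x = x := by
      intro x hx; simp [f, hgz x hx]
    have himg : f '' ball 0 1 = ball 0 1 := by
      ext y
      constructor
      · rintro ⟨x, hx, rfl⟩
        by_contra hy
        have := hinj (hfix _ hy)
        rw [this] at hy
        exact hy hx
      · intro hy
        obtain ⟨x, rfl⟩ := hsurj y
        refine ⟨x, ?_, rfl⟩
        by_contra hx
        rw [hfix x hx] at hy
        exact hx hy
    have hcv := integral_image_eq_integral_abs_det_fderiv_smul μ (s := ball (0:E) 1) (f := f)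
      (f' := fun x => ContinuousLinearMap.id ℝ E + t • A x) measurableSet_ball
      (fun x hx => ((hasFDerivAt_id x).add ((hA x hx).const_smul t)).hasFDerivWithinAt) hinj.injOn (fun _ => (1:ℝ))
    rw [himg] at hcv
    simp only [integral_const, smul_eq_mul, mul_one, measureReal_restrict_apply_univ] at hcv
    rw [hcv]
    apply setIntegral_congr_fun measurableSet_ball
    intro x hx
    have : 0 < (ContinuousLinearMap.id ℝ E + t • A x).det := by
      apply det_pos_of_small
      rw [norm_smul, Real.norm_of_nonneg ht.le]
      exact lt_of_le_of_lt (by gcongr; exact hAn x hx) htK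
    simp only
    rw [abs_of_pos this]
  let t : ℕ → ℝ := fun i => 1 / ((K + 1) * (i + 1))
  have htinj : Function.Injective t := by
    intro i j hij
    have hK0 : (0:ℝ) < K + 1 := by positivity
    simp only [t, one_div, inv_inj] at hij
    have := mul_left_cancel₀ hK0.ne' hij
    exact_mod_cast add_right_cancel this
  obtain ⟨l, hl1, hl2⟩ := det_interp (E := E) t htinj
  have hfin : ∫ x in ball (0:E) 1, (ContinuousLinearMap.id ℝ E + A x).det ∂μ = μ.real (ball 0 1) := by
    rw [show (fun x => (ContinuousLinearMap.id ℝ E + A x).det) = _ from funext fun x => hl2 (A x)]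
    rw [integral_finsetSum _ (fun i _ => (hIntg (t i)).const_mul _)]
    simp_rw [integral_const_mul]
    have hsm : ∀ i, t i * K < 1 := by
      intro i
      simp only [t]
      have hK0 : (0:ℝ) ≤ K := K.2
      rw [div_mul_eq_mul_div, div_lt_one (by positivity)]
      have : (0:ℝ) ≤ i := by positivity
      nlinarith
    rw [Finset.sum_congr rfl (fun i _ => by rw [key (t i) (by positivity) (hsm i)]), ← Finset.sum_mul, hl1, one_mul]
  have hzero : ∀ x, (ContinuousLinearMap.id ℝ E + A x).det = 0 := by
    intro x
    have : ContinuousLinearMap.id ℝ E + A x = fderiv ℝ r x := by simp [A]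
    rw [this, hdet0]
  simp only [hzero, integral_zero] at hfin
  have : 0 < μ.real (ball (0:E) 1) := by
    apply ENNReal.toReal_pos
    · exact (measure_ball_pos μ 0 one_pos).ne'
    · exact measure_ball_lt_top.ne
  linarith


theorem core1 {E : Type*} [NormedAddCommGroup E] [InnerProductSpace ℝ E] [FiniteDimensional ℝ E]
    (G : E → E) (hG : Continuous G) (h0 : ∀ x, G x ≠ 0) (h1 : ∀ x, 1 ≤ ‖x‖ → G x = x) : False := by
  obtain ⟨g, hg, hd, hs⟩ := (hG.sub continuous_id).exists_contDiff_approx 1 (ε := fun x => ‖G x‖)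
    hG.norm (fun x => norm_pos_iff.2 (h0 x))
  have hne : ∀ x, x + g x ≠ 0 := by
    intro x hx
    have := hd x
    rw [dist_eq_norm, show g x = -x from (neg_eq_of_add_eq_zero_right hx).symm] at this
    simp only [Pi.sub_apply, id] at this
    rw [show -x - (G x - x) = - G x by abel, norm_neg] at this
    exact lt_irrefl _ this
  have hne' : ∀ x, ‖x + g x‖ ≠ 0 := fun x => norm_ne_zero_iff.2 (hne x)
  refine no_C1_retraction (fun x => ‖x + g x‖⁻¹ • (x + g x)) ?_ ?_ ?_
  · have hg' : ContDiff ℝ 1 (fun x => x + g x) := contDiff_id.add hg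
    exact ((hg'.norm ℝ hne).inv hne').smul hg'
  · intro x
    rw [norm_smul, norm_inv, norm_norm, inv_mul_cancel₀ (hne' x)]
  · intro x hx
    have : g x = 0 := by
      by_contra h
      have := hs h
      simp [h1 x hx.ge] at this
    simp [this, hx]

theorem core2 {E : Type*} [NormedAddCommGroup E] [InnerProductSpace ℝ E] [FiniteDimensional ℝ E]
    (h : E → E) (hc : ContinuousOn h (closedBall 0 1)) (h0 : ∀ x, ‖x‖ ≤ 1 → h x ≠ 0)
    (h1 : ∀ x, ‖x‖ = 1 → ∀ l : ℝ, 0 ≤ l → h x ≠ - (l • x)) : False := by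
  let p : E → E := fun x => (max 1 ‖(2:ℝ) • x‖)⁻¹ • (2:ℝ) • x
  let s : E → ℝ := fun x => max 0 (min 1 (2 * ‖x‖ - 1))
  have hmpos : ∀ x : E, 0 < max 1 ‖(2:ℝ) • x‖ := fun x => lt_of_lt_of_le one_pos (le_max_left _ _)
  have hp : Continuous p := by
    apply Continuous.smul
    · exact Continuous.inv₀ (by fun_prop) (fun x => (hmpos x).ne')
    · fun_prop
  have hp1 : ∀ x, ‖p x‖ ≤ 1 := by
    intro x
    simp only [p]
    rw [norm_smul, norm_inv, Real.norm_of_nonneg (hmpos x).le, inv_mul_le_iff₀ (hmpos x), mul_one]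
    exact le_max_right _ _
  have hhp : Continuous (fun x => h (p x)) :=
    hc.comp_continuous hp (fun x => by simpa using hp1 x)
  have hs : Continuous s := by fun_prop
  refine core1 (fun x => (1 - s x) • h (p x) + s x • x) ?_ ?_ ?_
  · exact ((continuous_const.sub hs).smul hhp).add (hs.smul continuous_id)
  · intro x hx
    have hs0 : 0 ≤ s x := le_max_left _ _
    have hs1 : s x ≤ 1 := max_le zero_le_one (min_le_left _ _)
    rcases le_or_gt ‖x‖ (1/2) with hx2 | hx2
    · have : s x = 0 := by
        simp only [s]
        apply max_eq_left
        exact (min_le_right _ _).trans (by linarith)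
      simp only [this, sub_zero, one_smul, zero_smul, add_zero] at hx
      exact h0 _ (hp1 x) hx
    · have hn : ‖(2:ℝ) • x‖ = 2 * ‖x‖ := by rw [norm_smul]; norm_num
      have hm : max 1 ‖(2:ℝ) • x‖ = 2 * ‖x‖ := by rw [hn]; exact max_eq_right (by linarith)
      have hxpos : 0 < ‖x‖ := by linarith
      have hpx : p x = ‖x‖⁻¹ • x := by
        simp only [p]; rw [hm, smul_smul]; congr 1; field_simp
      have hxp : x = ‖x‖ • p x := by rw [hpx, smul_smul, mul_inv_cancel₀ hxpos.ne', one_smul]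
      have hpn : ‖p x‖ = 1 := by rw [hpx, norm_smul, norm_inv, norm_norm, inv_mul_cancel₀ hxpos.ne']
      rcases hs1.eq_or_lt with h | hlt
      · simp only [h, sub_self, zero_smul, one_smul, zero_add] at hx
        rw [hx] at hxpos; simp at hxpos
      · have h1s : 0 < 1 - s x := by linarith
        refine h1 (p x) hpn ((1 - s x)⁻¹ * (s x * ‖x‖)) (by positivity) ?_
        have h3 : (1 - s x) • h (p x) = - (s x • x) := eq_neg_of_add_eq_zero_left hx
        have h4 : h (p x) = (1 - s x)⁻¹ • ((1 - s x) • h (p x)) := by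
          rw [smul_smul, inv_mul_cancel₀ h1s.ne', one_smul]
        rw [h4, h3, smul_neg]
        congr 1
        rw [show s x • x = s x • (‖x‖ • p x) by rw [← hxp]]
        simp only [smul_smul]
  · intro x hx
    have : s x = 1 := by
      simp only [s]
      rw [min_eq_left (by linarith)]
      simp
    simp [this]


theorem iod_ball {E : Type} [NormedAddCommGroup E] [InnerProductSpace ℝ E] [FiniteDimensional ℝ E]
    (f : E → E) (hf : ContinuousOn f (closedBall 0 1)) (hinj : InjOn f (closedBall 0 1)) :
    f 0 ∈ interior (f '' closedBall 0 1) := by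
  let _ : MeasurableSpace E := borel E
  have : BorelSpace E := ⟨rfl⟩
  let μ : Measure E := Measure.addHaar
  have hB0 : (0:E) ∈ closedBall (0:E) 1 := by simp
  rcases subsingleton_or_nontrivial E with hsub | hnt
  · have : f '' closedBall 0 1 = univ := by
      ext y; simp only [mem_univ, iff_true]
      exact ⟨0, hB0, Subsingleton.elim _ _⟩
    rw [this]; simp
  have : TietzeExtension.{0,0} E := TietzeExtension.of_tvs ℝ
  let e : closedBall (0:E) 1 → E := fun x => f x
  have hec : Continuous e := hf.domRestrict
  have hei : Function.Injective e := fun x y h => Subtype.ext (hinj x.2 y.2 h)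
  have : CompactSpace (closedBall (0:E) 1) := isCompact_iff_compactSpace.1 (isCompact_closedBall _ _)
  have hee := hec.isClosedEmbedding hei
  obtain ⟨G, hG⟩ := ContinuousMap.exists_extension' hee (⟨fun x => (x : E), continuous_subtype_val⟩ : C(closedBall (0:E) 1, E))
  have hG' : ∀ x ∈ closedBall (0:E) 1, G (f x) = x := fun x hx => congrFun hG ⟨x, hx⟩
  by_contra hcon
  let K := f '' closedBall 0 1
  have hK : IsCompact K := (isCompact_closedBall _ _).image_of_continuousOn hf
  obtain ⟨ε, hε, hGε⟩ : ∃ ε > 0, ∀ y, dist y (f 0) ≤ 2 * ε → ‖G y‖ < 1/4 := by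
    have h1 : ∀ᶠ y in nhds (f 0), ‖G y‖ < 1/4 := by
      apply (G.continuous.norm.continuousAt (x := f 0)).eventually_lt continuousAt_const
      rw [hG' 0 hB0]; norm_num
    obtain ⟨d, hd, h⟩ := Metric.eventually_nhds_iff.1 h1
    exact ⟨d/4, by positivity, fun y hy => h (by linarith)⟩
  obtain ⟨c, hcd, hcK⟩ : ∃ c, dist c (f 0) < ε ∧ c ∉ K := by
    by_contra h
    push Not at h
    exact hcon (mem_interior.2 ⟨ball (f 0) ε, fun y hy => h y hy, isOpen_ball, mem_ball_self hε⟩)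
  have hK1 : IsCompact (K \ ball c ε) := hK.diff isOpen_ball
  obtain ⟨δ0, hδ0, hδK0⟩ := hK1.exists_forall_le' (f := fun y => ‖G y‖) (a := 0) G.continuous.norm.continuousOn (by
    rintro _ ⟨⟨x, hx, rfl⟩, hy⟩
    rw [hG' x hx, norm_pos_iff]
    rintro rfl
    exact hy (by rw [mem_ball, dist_comm]; exact hcd))
  let δ := min δ0 (1/4)
  have hδ : 0 < δ := lt_min hδ0 (by norm_num)
  have hδ4 : δ ≤ 1/4 := min_le_right _ _
  obtain ⟨P, hP, hPd, -⟩ := G.continuous.exists_contDiff_approx 1 (ε := fun _ => δ/2) continuous_const (fun _ => by positivity)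
  obtain ⟨c', hc', hc'P⟩ : ∃ c', ‖c'‖ < δ/2 ∧ c' ∉ P '' sphere c ε := by
    by_contra h
    push Not at h
    have h0 : μ (P '' sphere c ε) = 0 :=
      addHaar_image_eq_zero_of_differentiableOn_of_addHaar_eq_zero μ
        (hP.differentiable (by norm_num)).differentiableOn (Measure.addHaar_sphere μ c ε)
    have h1 : ball (0:E) (δ/2) ⊆ P '' sphere c ε := fun y hy => h y (by simpa using hy)
    have := measure_mono_null h1 h0
    exact (measure_ball_pos μ 0 (by positivity)).ne' this
  let H : E → E := fun y => P y - c'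
  have hHc : Continuous H := hP.continuous.sub continuous_const
  have hHG : ∀ y, ‖H y - G y‖ < δ := by
    intro y
    have h1 := hPd y
    rw [dist_eq_norm] at h1
    calc ‖H y - G y‖ = ‖(P y - G y) - c'‖ := by simp only [H]; congr 1; abel
      _ ≤ ‖P y - G y‖ + ‖c'‖ := norm_sub_le _ _
      _ < δ := by linarith
  let ρ : E → E := fun y => c + (max 1 (ε / ‖y - c‖)) • (y - c)
  have hρ1 : ∀ y, ε ≤ ‖y - c‖ → ρ y = y := by
    intro y hy
    have : ε / ‖y - c‖ ≤ 1 := by rw [div_le_one (by linarith)]; exact hy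
    simp [ρ, max_eq_left this]
  have hρ2 : ∀ y, y ≠ c → ‖y - c‖ ≤ ε → ‖ρ y - c‖ = ε := by
    intro y hyc hy
    have h0 : 0 < ‖y - c‖ := norm_pos_iff.2 (sub_ne_zero.2 hyc)
    have : 1 ≤ ε / ‖y - c‖ := by rw [one_le_div h0]; exact hy
    simp only [ρ, max_eq_right this, add_sub_cancel_left]
    rw [norm_smul, Real.norm_of_nonneg (by positivity), div_mul_cancel₀ _ h0.ne']
  have hρc : ContinuousOn ρ {c}ᶜ := by
    apply ContinuousOn.add continuousOn_const
    apply ContinuousOn.smul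
    · refine ContinuousOn.sup continuousOn_const ?_
      apply ContinuousOn.div continuousOn_const (by fun_prop)
      intro y hy
      exact norm_ne_zero_iff.2 (sub_ne_zero.2 hy)
    · fun_prop
  have hfc : ∀ x ∈ closedBall (0:E) 1, f x ≠ c := fun x hx h => hcK ⟨x, hx, h⟩
  refine core2 (fun x => H (ρ (f x))) ?_ ?_ ?_
  · exact hHc.comp_continuousOn (hρc.comp hf hfc)
  · intro x hx h0
    have hxB : x ∈ closedBall (0:E) 1 := by simpa using hx
    rcases le_or_gt ε ‖f x - c‖ with h | h
    · rw [hρ1 _ h] at h0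
      have h1 := hHG (f x)
      rw [h0, zero_sub, norm_neg] at h1
      have h2 := hδK0 (f x) ⟨⟨x, hxB, rfl⟩, by simp [dist_eq_norm, h]⟩
      have : δ ≤ δ0 := min_le_left _ _
      linarith
    · apply hc'P
      refine ⟨ρ (f x), ?_, sub_eq_zero.1 h0⟩
      rw [mem_sphere, dist_eq_norm]
      exact hρ2 _ (hfc x hxB) h.le
  · intro x hx l hl heq
    have hxB : x ∈ closedBall (0:E) 1 := by simp [hx]
    have hlt : ‖H (ρ (f x)) - x‖ < 1 := by
      rcases le_or_gt ε ‖f x - c‖ with h | h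
      · rw [hρ1 _ h]
        have := hHG (f x)
        rw [hG' x hxB] at this
        linarith
      · have h1 := hHG (ρ (f x))
        have h2 : ‖G (ρ (f x))‖ < 1/4 := by
          apply hGε
          have := hρ2 _ (hfc x hxB) h.le
          calc dist (ρ (f x)) (f 0) ≤ dist (ρ (f x)) c + dist c (f 0) := dist_triangle _ _ _
            _ ≤ 2 * ε := by rw [dist_eq_norm, this]; linarith
        have h3 : ‖x‖ < 1/4 := by
          have := hGε (f x) (by
            calc dist (f x) (f 0) ≤ dist (f x) c + dist c (f 0) := dist_triangle _ _ _
              _ ≤ 2 * ε := by rw [dist_eq_norm (f x) c]; linarith)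
          rwa [hG' x hxB] at this
        linarith
    rw [heq, show -(l • x) - x = -((l + 1) • x) by rw [add_smul, one_smul]; abel, norm_neg, norm_smul, hx, Real.norm_of_nonneg (by linarith)] at hlt
    linarith

theorem iod_open {E E' : Type} [NormedAddCommGroup E] [InnerProductSpace ℝ E] [FiniteDimensional ℝ E]
    [NormedAddCommGroup E'] [NormedSpace ℝ E'] [FiniteDimensional ℝ E']
    (hfr : finrank ℝ E' = finrank ℝ E) (U : Set E) (hU : IsOpen U)
    (f : E → E') (hf : ContinuousOn f U) (hinj : InjOn f U) : IsOpen (f '' U) := by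
  let L : E' ≃L[ℝ] E := ContinuousLinearEquiv.ofFinrankEq hfr
  rw [isOpen_iff_mem_nhds]
  rintro _ ⟨a, ha, rfl⟩
  obtain ⟨r, hr, hrU⟩ := Metric.nhds_basis_closedBall.mem_iff.1 (hU.mem_nhds ha)
  let s : E → E := fun x => a + r • x
  have hs : MapsTo s (closedBall 0 1) U := by
    intro x hx
    apply hrU
    simp only [mem_closedBall, dist_zero_right] at hx
    simp only [s, mem_closedBall, dist_self_add_left, norm_smul, Real.norm_of_nonneg hr.le]
    nlinarith
  have hsinj : Function.Injective s := by
    intro x y h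
    simp only [s, add_right_inj] at h
    exact smul_right_injective E hr.ne' h
  have h1 := iod_ball (fun x => L (f (s x))) (L.continuous.comp_continuousOn (hf.comp (by fun_prop) hs)) (by
    intro x hx y hy h
    exact hsinj (hinj (hs hx) (hs hy) (L.injective h)))
  rw [mem_interior_iff_mem_nhds] at h1
  have h2 : L ⁻¹' ((fun x => L (f (s x))) '' closedBall 0 1) ∈ nhds (f a) := by
    apply L.continuous.continuousAt
    simpa [s] using h1
  refine Filter.mem_of_superset h2 ?_
  rintro y ⟨x, hx, hxy⟩
  exact ⟨s x, hs hx, L.injective hxy⟩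

theorem iod_lt {E E' : Type} [NormedAddCommGroup E] [InnerProductSpace ℝ E] [FiniteDimensional ℝ E]
    [NormedAddCommGroup E'] [NormedSpace ℝ E'] [FiniteDimensional ℝ E']
    (hfr : finrank ℝ E' < finrank ℝ E) (U : Set E) (hU : IsOpen U)
    (f : E → E') (hf : ContinuousOn f U) (hinj : InjOn f U) : U = ∅ := by
  by_contra hne
  obtain ⟨a, ha⟩ := nonempty_iff_ne_empty.2 hne
  let k := finrank ℝ E - finrank ℝ E'
  have hk : 0 < k := by omega
  have h1 := iod_open (E := E) (E' := E' × (Fin k → ℝ)) (by simp [finrank_prod, k]; omega) U hU (fun x => (f x, 0))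
    (hf.prodMk continuousOn_const) (by
      intro x hx y hy h
      exact hinj hx hy (Prod.ext_iff.1 h).1)
  have h2 := (isOpenMap_snd _ h1)
  have h3 : Prod.snd '' ((fun x => (f x, (0 : Fin k → ℝ))) '' U) = {0} := by
    ext y
    constructor
    · rintro ⟨_, ⟨x, -, rfl⟩, rfl⟩; simp
    · rintro rfl; exact ⟨_, ⟨a, ha, rfl⟩, rfl⟩
  rw [h3] at h2
  have : Nonempty (Fin k) := ⟨⟨0, hk⟩⟩
  exact not_isOpen_singleton (0 : Fin k → ℝ) h2

/-- Sphere versions. -/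
theorem iod_sphere {E E' : Type} [NormedAddCommGroup E] [InnerProductSpace ℝ E] [FiniteDimensional ℝ E]
    [NormedAddCommGroup E'] [NormedSpace ℝ E'] [FiniteDimensional ℝ E']
    (O : Set E) (hO : IsOpen O)
    (f : E → E') (hf : ContinuousOn f (sphere 0 1 ∩ O)) (hinj : InjOn f (sphere 0 1 ∩ O)) :
    (finrank ℝ E' + 1 = finrank ℝ E → IsOpen (f '' (sphere 0 1 ∩ O))) ∧
    (finrank ℝ E' + 1 < finrank ℝ E → sphere 0 1 ∩ O = ∅) := by
  let n : E → E := fun x => ‖x‖⁻¹ • x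
  have hn : ContinuousOn n {0}ᶜ := by
    apply ContinuousOn.smul _ continuousOn_id
    apply ContinuousOn.inv₀ (by fun_prop)
    intro x hx; exact norm_ne_zero_iff.2 hx
  let U : Set E := {0}ᶜ ∩ n ⁻¹' O
  have hU : IsOpen U := hn.isOpen_inter_preimage isOpen_compl_singleton hO
  have hn1 : ∀ x, x ≠ 0 → ‖n x‖ = 1 := by
    intro x hx
    simp only [n]; rw [norm_smul, norm_inv, norm_norm, inv_mul_cancel₀ (norm_ne_zero_iff.2 hx)]
  have hnU : MapsTo n U (sphere 0 1 ∩ O) := fun x hx => ⟨by simpa using hn1 x hx.1, hx.2⟩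
  have hSU : ∀ x ∈ sphere (0:E) 1 ∩ O, x ∈ U ∧ n x = x := by
    rintro x ⟨hx, hxO⟩
    have hx1 : ‖x‖ = 1 := by simpa using hx
    have : n x = x := by simp [n, hx1]
    refine ⟨⟨?_, ?_⟩, this⟩
    · rintro rfl; simp at hx1
    · rw [mem_preimage, this]; exact hxO
  let F : E → E' × ℝ := fun x => (f (n x), ‖x‖)
  have hF : ContinuousOn F U := (hf.comp (hn.mono inter_subset_left) hnU).prodMk (by fun_prop)
  have hFinj : InjOn F U := by
    intro x hx y hy h
    have h1 := hinj (hnU hx) (hnU hy) (Prod.ext_iff.1 h).1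
    have h2 : ‖x‖ = ‖y‖ := (Prod.ext_iff.1 h).2
    simp only [n] at h1
    rw [h2] at h1
    exact smul_right_injective E (inv_ne_zero (norm_ne_zero_iff.2 hy.1)) h1
  constructor
  · intro hd
    have h1 := isOpenMap_fst _ (iod_open (by simpa [finrank_prod] using hd) U hU F hF hFinj)
    convert h1 using 1
    ext y
    constructor
    · rintro ⟨x, hx, rfl⟩
      exact ⟨_, ⟨x, (hSU x hx).1, rfl⟩, by simp [F, (hSU x hx).2]⟩
    · rintro ⟨_, ⟨x, hx, rfl⟩, rfl⟩
      exact ⟨n x, hnU hx, rfl⟩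
  · intro hd
    have h1 := iod_lt (by simpa [finrank_prod] using hd) U hU F hF hFinj
    by_contra hne
    obtain ⟨x, hx⟩ := nonempty_iff_ne_empty.2 hne
    have := (hSU x hx).1
    rw [h1] at this
    exact this


theorem ext_sphere {E E' : Type} [NormedAddCommGroup E] [InnerProductSpace ℝ E] [FiniteDimensional ℝ E]
    [NormedAddCommGroup E'] [InnerProductSpace ℝ E'] [FiniteDimensional ℝ E']
    (hfr : finrank ℝ E < finrank ℝ E') (A : Set E) (hA : IsClosed A) (f : C(A, sphere (0:E') 1)) :
    ∃ F : C(E, sphere (0:E') 1), ∀ x : A, F x = f x := by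
  have : TietzeExtension.{0,0} E' := TietzeExtension.of_tvs ℝ
  obtain ⟨g, hg⟩ := ContinuousMap.exists_restrict_eq hA (⟨fun x => (f x : E'), by fun_prop⟩ : C(A, E'))
  have hg' : ∀ x : A, g x = f x := fun x => congrArg (fun h => h x) hg
  obtain ⟨P, hP, hPd, -⟩ := g.continuous.exists_contDiff_approx 1 (ε := fun _ => 1/4) continuous_const (fun _ => by positivity)
  obtain ⟨c, hc, hcP⟩ : ∃ c : E', ‖c‖ < 1/4 ∧ c ∉ range P := by
    have h1 := hP.dense_compl_range_of_finrank_lt_finrank hfr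
    obtain ⟨c, hc, hcP⟩ := h1.exists_dist_lt 0 (ε := 1/4) (by norm_num)
    exact ⟨c, by simpa using hcP, hc⟩
  let χ : E → ℝ := fun x => max 0 (min 1 (4 * (1 - ‖g x‖)))
  have hχ : Continuous χ := by fun_prop
  let G : E → E' := fun x => g x + χ x • (P x - c - g x)
  have hG : Continuous G := by
    have := hP.continuous
    exact g.continuous.add (hχ.smul ((this.sub continuous_const).sub g.continuous))
  have hG0 : ∀ x, G x ≠ 0 := by
    intro x hx
    have hχ0 : 0 ≤ χ x := le_max_left _ _
    have hχ1 : χ x ≤ 1 := max_le zero_le_one (min_le_left _ _)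
    rcases le_or_gt ‖g x‖ (3/4) with h | h
    · have : χ x = 1 := by
        simp only [χ]; rw [min_eq_left (by linarith)]; simp
      simp only [G, this, one_smul] at hx
      exact hcP ⟨x, by rw [← sub_eq_zero, ← hx]; abel⟩
    · have h1 := hPd x
      rw [dist_eq_norm] at h1
      have h2 : ‖P x - c - g x‖ ≤ 1/2 := by
        calc ‖P x - c - g x‖ = ‖(P x - g x) - c‖ := by congr 1; abel
          _ ≤ ‖P x - g x‖ + ‖c‖ := norm_sub_le _ _
          _ ≤ 1/2 := by linarith
      have h3 : ‖g x‖ = ‖χ x • (P x - c - g x)‖ := by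
        conv_lhs => rw [eq_neg_of_add_eq_zero_left hx, norm_neg]
      rw [norm_smul, Real.norm_of_nonneg hχ0] at h3
      nlinarith [norm_nonneg (P x - c - g x)]
  have hGn : ∀ x, ‖G x‖ ≠ 0 := fun x => norm_ne_zero_iff.2 (hG0 x)
  refine ⟨⟨fun x => ⟨‖G x‖⁻¹ • G x, ?_⟩, ?_⟩, ?_⟩
  · simp only [mem_sphere, dist_zero_right]
    rw [norm_smul, norm_inv, norm_norm, inv_mul_cancel₀ (hGn x)]
  · exact Continuous.subtype_mk ((hG.norm.inv₀ hGn).smul hG) _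
  · intro x
    have h1 : ‖g x‖ = 1 := by rw [hg' x]; simp
    have h2 : G x = f x := by simp [G, χ, hg' x]
    ext1
    simp [h2]

theorem retract_sphere {E : Type} [NormedAddCommGroup E] [InnerProductSpace ℝ E] [FiniteDimensional ℝ E]
    (A : Set E) (hA : IsClosed A) (hAS : A ⊆ sphere 0 1) (p : E) (hp : ‖p‖ = 1) (hpA : p ∉ A) :
    ∃ e : C(E, E), (∀ x, ‖e x‖ = 1 ∧ e x ≠ p) ∧ ∀ x ∈ A, e x = x := by
  have : TietzeExtension.{0,0} (Submodule.span ℝ {p})ᗮ := TietzeExtension.of_tvs ℝ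
  let S := stereographic hp
  have hSs : ∀ x : A, (⟨x, hAS x.2⟩ : sphere (0:E) 1) ∈ S.source := by
    intro x
    rw [stereographic_source]
    intro h
    apply hpA
    have : (x : E) = p := congrArg Subtype.val h
    rw [← this]; exact x.2
  obtain ⟨g, hg⟩ := ContinuousMap.exists_restrict_eq hA
    (⟨fun x => S ⟨x, hAS x.2⟩, S.continuousOn.comp_continuous (by fun_prop) hSs⟩ : C(A, (Submodule.span ℝ {p})ᗮ))
  have hg' : ∀ x : A, g x = S ⟨x, hAS x.2⟩ := fun x => congrArg (fun h => h x) hg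
  have ht : ∀ y, y ∈ S.target := by intro y; rw [stereographic_target]; trivial
  refine ⟨⟨fun x => (S.symm (g x) : E), ?_⟩, ?_, ?_⟩
  · exact continuous_subtype_val.comp (S.symm.continuousOn.comp_continuous g.continuous (fun x => ht _))
  · intro x
    refine ⟨by simp, ?_⟩
    intro h
    have h1 := S.map_target (ht (g x))
    rw [stereographic_source] at h1
    exact h1 (Subtype.ext h)
  · intro x hx
    have h1 := hg' ⟨x, hx⟩
    simp only at h1
    simp only [ContinuousMap.coe_mk]
    rw [h1, S.left_inv (hSs ⟨x, hx⟩)]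

theorem null_ext {E Y : Type} [NormedAddCommGroup E] [InnerProductSpace ℝ E] [TopologicalSpace Y]
    (f : C(sphere (0:E) 1, Y)) (hf : f.Nullhomotopic) :
    ∃ F : C(closedBall (0:E) 1, Y), ∀ x : sphere (0:E) 1, F ⟨x, sphere_subset_closedBall x.2⟩ = f x := by
  classical
  obtain ⟨y, ⟨H⟩⟩ := hf
  by_cases hS : Nonempty (sphere (0:E) 1)
  swap
  · exact ⟨ContinuousMap.const _ y, fun x => (hS ⟨x⟩).elim⟩
  obtain ⟨s0⟩ := hS
  let n : E → sphere (0:E) 1 := fun x => if h : x = 0 then s0 else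
    ⟨‖x‖⁻¹ • x, by simp [norm_smul, inv_mul_cancel₀ (norm_ne_zero_iff.2 h)]⟩
  have hn : ContinuousOn n {0}ᶜ := by
    rw [continuousOn_iff_continuous_domRestrict]
    rw [Topology.IsInducing.subtypeVal.continuous_iff]
    have : (Subtype.val ∘ ({0}ᶜ : Set E).domRestrict n) = fun x : ({0}ᶜ : Set E) => ‖(x:E)‖⁻¹ • (x:E) := by
      ext1 x
      have := x.2
      simp only [mem_compl_iff, mem_singleton_iff] at this
      simp [n, this]
    rw [this]
    apply Continuous.smul _ continuous_subtype_val
    exact Continuous.inv₀ (by fun_prop) (fun x => norm_ne_zero_iff.2 x.2)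
  let τ : E → unitInterval := fun x => projIcc 0 1 zero_le_one (2 - 2 * ‖x‖)
  have hτ : Continuous τ := continuous_projIcc.comp (by fun_prop)
  have hF : Continuous (fun x : E => H (τ x, n x)) := by
    rw [continuous_iff_continuousAt]
    intro x
    by_cases hx : x = 0
    · have : (fun x : E => H (τ x, n x)) =ᶠ[nhds x] fun _ => y := by
        filter_upwards [isOpen_ball.mem_nhds (show x ∈ ball (0:E) (1/2) by simp [hx])] with z hz
        have : τ z = 1 := by
          have hz' : ‖z‖ < 1/2 := by simpa using hz
          exact projIcc_of_right_le _ (by linarith)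
        rw [this]
        exact H.apply_one _
      exact continuousAt_const.congr this.symm
    · apply H.continuous.continuousAt.comp
      exact hτ.continuousAt.prodMk (hn.continuousAt (isOpen_compl_singleton.mem_nhds hx))
  refine ⟨⟨fun x => H (τ x, n x), hF.comp continuous_subtype_val⟩, ?_⟩
  intro x
  have hx : ‖(x:E)‖ = 1 := by simp
  have h1 : τ x = 0 := projIcc_of_le_left _ (by rw [hx]; norm_num)
  have h2 : n x = x := by
    have : (x:E) ≠ 0 := by intro h; rw [h] at hx; simp at hx
    simp only [n, this, dite_false]
    ext1; simp
  simp only [ContinuousMap.coe_mk, h1, h2]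
  exact H.apply_zero _

noncomputable def dbl {E : Type} [NormedAddCommGroup E] [InnerProductSpace ℝ E] (u : E) : WithLp 2 (E × ℝ) :=
  WithLp.toLp 2 ((2 * √(1 - ‖u‖^2)) • u, 1 - 2 * ‖u‖^2)

theorem dbl_norm {E : Type} [NormedAddCommGroup E] [InnerProductSpace ℝ E] (u : E) (hu : ‖u‖ ≤ 1) :
    ‖dbl u‖ = 1 := by
  have h0 : 0 ≤ 1 - ‖u‖^2 := by nlinarith [norm_nonneg u]
  have h1 : ‖dbl u‖^2 = 1 := by
    rw [WithLp.prod_norm_sq_eq_of_L2]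
    show ‖(2*√(1-‖u‖^2))•u‖^2 + ‖1-2*‖u‖^2‖^2 = 1
    simp only [norm_smul, mul_pow, norm_mul, Real.norm_eq_abs, sq_abs, Real.sq_sqrt h0]
    ring
  nlinarith [norm_nonneg (dbl u)]

theorem dbl_cont {E : Type} [NormedAddCommGroup E] [InnerProductSpace ℝ E] : Continuous (dbl : E → _) := by
  unfold dbl
  apply (WithLp.prod_continuous_toLp 2 E ℝ).comp
  fun_prop

noncomputable def dblC (E : Type) [NormedAddCommGroup E] [InnerProductSpace ℝ E] :
    C(closedBall (0:E) 1, sphere (0 : WithLp 2 (E × ℝ)) 1) :=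
  ⟨fun u => ⟨dbl u, by simpa using dbl_norm u.1 (mem_closedBall_zero_iff.1 u.2)⟩,
    Continuous.subtype_mk (dbl_cont.comp continuous_subtype_val) _⟩

noncomputable def southPt (E : Type) [NormedAddCommGroup E] [InnerProductSpace ℝ E] :
    sphere (0 : WithLp 2 (E × ℝ)) 1 :=
  ⟨WithLp.toLp 2 (0, -1), by
    have : ‖(WithLp.toLp 2 (0, -1) : WithLp 2 (E × ℝ))‖^2 = 1 := by
      rw [WithLp.prod_norm_sq_eq_of_L2]; simp
    simp only [mem_sphere, dist_zero_right]
    nlinarith [norm_nonneg (WithLp.toLp 2 (0, -1) : WithLp 2 (E × ℝ))]⟩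

theorem dblC_south {E : Type} [NormedAddCommGroup E] [InnerProductSpace ℝ E] (u : closedBall (0:E) 1)
    (hu : ‖(u:E)‖ = 1) : dblC E u = southPt E := by
  ext1
  simp [dblC, southPt, dbl, hu]
  norm_num

theorem not_null {E Y : Type} [NormedAddCommGroup E] [InnerProductSpace ℝ E] [FiniteDimensional ℝ E]
    [TopologicalSpace Y] (φ k : C(closedBall (0:E) 1, Y)) (hφk : ∀ u : closedBall (0:E) 1, ‖(u:E)‖ = 1 → φ u = k u)
    (f : C(Y, sphere (0 : WithLp 2 (E × ℝ)) 1)) (h1 : ∀ u, f (φ u) = dblC E u) (h2 : ∀ u, f (k u) = southPt E) :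
    ¬ f.Nullhomotopic := by
  classical
  intro hf
  have hnorm : ∀ x : sphere (0 : WithLp 2 (E × ℝ)) 1, ‖(x : WithLp 2 (E × ℝ)).fst‖^2 + (x : WithLp 2 (E × ℝ)).snd^2 = 1 := by
    intro x
    have := WithLp.prod_norm_sq_eq_of_L2 (x : WithLp 2 (E × ℝ))
    simp at this
    linarith
  let π : C(sphere (0 : WithLp 2 (E × ℝ)) 1, closedBall (0:E) 1) :=
    ⟨fun x => ⟨(x : WithLp 2 (E × ℝ)).fst, by
      have := hnorm x
      simp only [mem_closedBall, dist_zero_right]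
      nlinarith [norm_nonneg (x : WithLp 2 (E × ℝ)).fst, sq_nonneg (x : WithLp 2 (E × ℝ)).snd]⟩, by
        apply Continuous.subtype_mk
        fun_prop⟩
  let s : C(sphere (0 : WithLp 2 (E × ℝ)) 1, Y) :=
    ⟨fun x => if 0 ≤ (x : WithLp 2 (E × ℝ)).snd then φ (π x) else k (π x), by
      apply Continuous.if_le (by fun_prop) (by fun_prop) continuous_const (by fun_prop)
      intro x hx
      apply hφk
      have := hnorm x
      rw [← hx] at this
      simp only [π, ContinuousMap.coe_mk]
      nlinarith [norm_nonneg (x : WithLp 2 (E × ℝ)).fst]⟩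
  obtain ⟨F, hF⟩ := null_ext (f.comp s) (hf.comp_left s)
  refine core2 (E := WithLp 2 (E × ℝ)) (fun x => if h : x ∈ closedBall (0 : WithLp 2 (E × ℝ)) 1 then (F ⟨x, h⟩ : WithLp 2 (E × ℝ)) else 0) ?_ ?_ ?_
  · rw [continuousOn_iff_continuous_domRestrict]
    have : (closedBall (0 : WithLp 2 (E × ℝ)) 1).domRestrict (fun x => if h : x ∈ closedBall (0 : WithLp 2 (E × ℝ)) 1 then (F ⟨x, h⟩ : WithLp 2 (E × ℝ)) else 0) = fun x => (F x : WithLp 2 (E × ℝ)) := by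
      ext1 x
      have := x.2
      simp only [domRestrict_apply]
      rw [dif_pos this]
    rw [this]
    fun_prop
  · intro x hx h0
    have hx' : x ∈ closedBall (0 : WithLp 2 (E × ℝ)) 1 := by simpa using hx
    rw [dif_pos hx'] at h0
    have : ‖(F ⟨x, hx'⟩ : WithLp 2 (E × ℝ))‖ = 1 := by simp
    rw [h0] at this
    simp at this
  · intro x hx l hl heq
    have hx' : x ∈ closedBall (0 : WithLp 2 (E × ℝ)) 1 := by simp [hx]
    rw [dif_pos hx'] at heq
    have hxs : x ∈ sphere (0 : WithLp 2 (E × ℝ)) 1 := by simp [hx]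
    have hl1 : l = 1 := by
      have : ‖(F ⟨x, hx'⟩ : WithLp 2 (E × ℝ))‖ = 1 := by simp
      rw [heq, norm_neg, norm_smul, hx, Real.norm_of_nonneg hl] at this
      linarith
    rw [hl1, one_smul] at heq
    have h3 := hF ⟨x, hxs⟩
    rw [h3] at heq
    simp only [ContinuousMap.comp_apply] at heq
    by_cases hz : 0 ≤ x.snd
    · have : s ⟨x, hxs⟩ = φ (π ⟨x, hxs⟩) := by simp [s, hz]
      rw [this, h1] at heq
      have h4 := congrArg WithLp.fst heq
      have h5 := congrArg WithLp.snd heq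
      simp [dblC, dbl, π] at h4 h5
      have h6 := hnorm ⟨x, hxs⟩
      simp only at h6
      have h7 : √(1 - ‖x.fst‖^2) = x.snd := by
        rw [show 1 - ‖x.fst‖^2 = x.snd^2 by linarith, Real.sqrt_sq hz]
      rw [h7] at h4
      have h8 : x.snd = 1/2 := by nlinarith
      rw [h8] at h4
      norm_num at h4
      have h9 : x.fst = 0 := by
        have h10 : (2:ℝ) • x.fst = 0 := by
          rw [two_smul]
          nth_rewrite 1 [h4]
          simp
        simpa using h10
      rw [h9, h8] at h6
      norm_num at h6
    · have : s ⟨x, hxs⟩ = k (π ⟨x, hxs⟩) := by simp [s, hz]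
      rw [this, h2] at heq
      have h5 := congrArg WithLp.snd heq
      simp [southPt] at h5
      rw [← h5] at hz
      norm_num at hz


section G
variable {F X : Type} [Fintype F] [TopologicalSpace X] [T2Space X] (C : RegularCW F X)

abbrev Eu (n : ℕ) : Type := EuclideanSpace ℝ (Fin n)

open Classical in
noncomputable def ch (f : F) (x : Eu (C.dim f)) : X :=
  if h : x ∈ closedBall (0 : Eu (C.dim f)) 1 then C.charMap f ⟨x, h⟩ else C.charMap f ⟨0, by simp⟩

noncomputable def chi (f : F) (y : X) : Eu (C.dim f) :=
  letI : Nonempty (closedBall (0 : Eu (C.dim f)) 1) := ⟨⟨0, by simp⟩⟩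
  (Function.invFun (C.charMap f) y : closedBall (0 : Eu (C.dim f)) 1)

def oc (f : F) : Set X := ch C f '' ball 0 1

theorem ch_eq (f : F) (x : Eu (C.dim f)) (h : x ∈ closedBall (0 : Eu (C.dim f)) 1) :
    ch C f x = C.charMap f ⟨x, h⟩ := by
  unfold ch; rw [dif_pos h]

theorem ch_coe (f : F) (x : closedBall (0 : Eu (C.dim f)) 1) :
    ch C f x = C.charMap f x := ch_eq C f x x.2

theorem ch_cont (f : F) : ContinuousOn (ch C f) (closedBall 0 1) := by
  rw [continuousOn_iff_continuous_domRestrict]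
  have : (closedBall 0 1).domRestrict (ch C f) = C.charMap f := by
    ext1 x; exact ch_coe C f x
  rw [this]; exact C.continuous_charMap f

theorem ch_inj (f : F) : InjOn (ch C f) (closedBall 0 1) := by
  intro x hx y hy h
  rw [ch_eq C f x hx, ch_eq C f y hy] at h
  exact congrArg Subtype.val (C.injective_charMap f h)

theorem cell_eq (f : F) : C.cell f = ch C f '' closedBall 0 1 := by
  ext y
  constructor
  · rintro ⟨x, rfl⟩
    exact ⟨x, x.2, ch_coe C f x⟩
  · rintro ⟨x, hx, rfl⟩
    exact ⟨⟨x, hx⟩, (ch_eq C f x hx).symm⟩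

theorem chi_mem (f : F) (y : X) : chi C f y ∈ closedBall (0 : Eu (C.dim f)) 1 := by
  unfold chi; exact Subtype.coe_prop _

theorem ch_chi (f : F) (y : X) (hy : y ∈ C.cell f) : ch C f (chi C f y) = y := by
  unfold chi
  rw [ch_coe]
  exact Function.invFun_eq hy

theorem chi_ch (f : F) (x : Eu (C.dim f)) (hx : x ∈ closedBall (0 : Eu (C.dim f)) 1) :
    chi C f (ch C f x) = x := by
  apply ch_inj C f (chi_mem C f _) hx
  apply ch_chi
  rw [cell_eq]
  exact ⟨x, hx, rfl⟩

theorem ch_emb (f : F) : Topology.IsClosedEmbedding (C.charMap f) :=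
  (C.continuous_charMap f).isClosedEmbedding (C.injective_charMap f)

theorem chi_cont (f : F) : ContinuousOn (chi C f) (C.cell f) := by
  unfold chi
  apply continuous_subtype_val.comp_continuousOn
  rw [(ch_emb C f).isInducing.continuousOn_iff]
  apply continuousOn_id.congr
  intro y hy
  exact Function.invFun_eq hy

theorem image_closed (f : F) (K : Set (Eu (C.dim f))) (hK : IsClosed K) (hK1 : K ⊆ closedBall 0 1) :
    IsClosed (ch C f '' K) := by
  apply IsCompact.isClosed
  apply IsCompact.image_of_continuousOn _ ((ch_cont C f).mono hK1)
  exact (isCompact_closedBall 0 1).of_isClosed_subset hK hK1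

theorem cell_closed (f : F) : IsClosed (C.cell f) := by
  rw [cell_eq]; exact image_closed C f _ isClosed_closedBall le_rfl

theorem oc_eq (f : F) : oc C f = C.charMap f '' {x | ‖(x : EuclideanSpace ℝ (Fin (C.dim f)))‖ < 1} := by
  ext y
  constructor
  · rintro ⟨x, hx, rfl⟩
    exact ⟨⟨x, ball_subset_closedBall hx⟩, by simpa using hx, (ch_eq C f x _).symm⟩
  · rintro ⟨x, hx, rfl⟩
    exact ⟨x, by simpa using hx, ch_coe C f x⟩

theorem oc_sub (f : F) : oc C f ⊆ C.cell f := by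
  rw [cell_eq]; exact image_mono ball_subset_closedBall

theorem oc_unique {f g : F} {y : X} (hf : y ∈ oc C f) (hg : y ∈ oc C g) : f = g := by
  by_contra h
  have := C.disjoint_openCells f g h
  rw [← oc_eq, ← oc_eq] at this
  exact disjoint_left.1 this hf hg

theorem bdry (f : F) (w : Eu (C.dim f)) (hw : ‖w‖ = 1) : ∃ g, C.dim g < C.dim f ∧ ch C f w ∈ C.cell g := by
  have h1 : ch C f w ∈ C.charMap f '' {x | ‖(x : EuclideanSpace ℝ (Fin (C.dim f)))‖ = 1} :=
    ⟨⟨w, by simp [hw]⟩, hw, (ch_eq C f w _).symm⟩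
  have h2 := C.boundary f h1
  simp only [mem_iUnion, mem_setOf_eq] at h2
  obtain ⟨g, hg, h⟩ := h2
  exact ⟨g, hg, h⟩

theorem carrier_ex : ∀ (n : ℕ) (f : F), C.dim f = n → ∀ y ∈ C.cell f, ∃ g, y ∈ oc C g ∧ (g = f ∨ C.dim g < C.dim f) := by
  intro n
  induction n using Nat.strong_induction_on with
  | _ n ih =>
    intro f hf y hy
    rw [cell_eq] at hy
    obtain ⟨w, hw, rfl⟩ := hy
    have hw' : ‖w‖ ≤ 1 := by simpa using hw
    rcases hw'.lt_or_eq with h | h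
    · exact ⟨f, ⟨w, by simpa using h, rfl⟩, Or.inl rfl⟩
    · obtain ⟨g, hg, hgc⟩ := bdry C f w h
      obtain ⟨k, hk, hkd⟩ := ih (C.dim g) (hf ▸ hg) g rfl _ hgc
      refine ⟨k, hk, Or.inr ?_⟩
      rcases hkd with rfl | h
      · exact hg
      · omega

theorem oc_dim {f g : F} {y : X} (hg : y ∈ oc C g) (hf : y ∈ C.cell f) : g = f ∨ C.dim g < C.dim f := by
  obtain ⟨k, hk, hkd⟩ := carrier_ex C _ f rfl y hf
  rw [oc_unique C hg hk]; exact hkd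

theorem exists_carrier (y : X) : ∃ g, y ∈ oc C g := by
  have : y ∈ ⋃ f, Set.range (C.charMap f) := by rw [C.cover]; trivial
  obtain ⟨f, hf⟩ := mem_iUnion.1 this
  obtain ⟨g, hg, -⟩ := carrier_ex C _ f rfl y hf
  exact ⟨g, hg⟩

theorem cell_sub_of_oc (g : F) (S : Set X) (hS : IsClosed S) (h : oc C g ⊆ S) : C.cell g ⊆ S := by
  have h1 : IsClosed (closedBall 0 1 ∩ ch C g ⁻¹' S) :=
    (ch_cont C g).preimage_isClosed_of_isClosed isClosed_closedBall hS
  have h2 : ball 0 1 ⊆ closedBall 0 1 ∩ ch C g ⁻¹' S :=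
    fun x hx => ⟨ball_subset_closedBall hx, h ⟨x, hx, rfl⟩⟩
  have h3 := h1.closure_subset_iff.2 h2
  rw [closure_ball _ one_ne_zero] at h3
  rw [cell_eq]
  rintro _ ⟨x, hx, rfl⟩
  exact (h3 hx).2

theorem key (f g : F) (T : Set X) (hT : IsClosed T)
    (h : ∀ w ∈ sphere 0 1, ch C f w ∉ T → ch C f w ∈ oc C g) :
    (C.dim g + 1 = C.dim f → IsOpen ((chi C g ∘ ch C f) '' (sphere 0 1 ∩ ch C f ⁻¹' Tᶜ))) ∧
    (C.dim g + 1 < C.dim f → sphere 0 1 ∩ ch C f ⁻¹' Tᶜ = ∅) := by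
  have hc : ContinuousOn (ch C f) (sphere 0 1) := (ch_cont C f).mono sphere_subset_closedBall
  obtain ⟨O, hO, hOe⟩ := continuousOn_iff'.1 hc _ hT.isOpen_compl
  have hW : sphere 0 1 ∩ ch C f ⁻¹' Tᶜ = sphere 0 1 ∩ O := by
    rw [inter_comm, hOe, inter_comm]
  have h' : ∀ w ∈ sphere 0 1 ∩ O, ch C f w ∈ C.cell g := by
    intro w hw
    rw [← hW] at hw
    exact oc_sub C g (h w hw.1 hw.2)
  have := iod_sphere O hO (chi C g ∘ ch C f)
    ((chi_cont C g).comp (hc.mono inter_subset_left) h') (by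
      intro a ha b hb hab
      apply ch_inj C f (sphere_subset_closedBall ha.1) (sphere_subset_closedBall hb.1)
      rw [← ch_chi C g _ (h' a ha), ← ch_chi C g _ (h' b hb)]
      exact congrArg _ hab)
  rw [hW]
  simpa using this

theorem front1 (f g : F) (w : Eu (C.dim f)) (hw : ‖w‖ = 1) (hg : ch C f w ∈ oc C g)
    (hd : C.dim g + 1 = C.dim f) : C.cell g ⊆ C.cell f := by
  let T : Set X := ⋃ h ∈ {h | h ≠ g ∧ C.dim h ≤ C.dim g}, C.cell h
  have hT : IsClosed T := (Set.toFinite _).isClosed_biUnion (fun h _ => cell_closed C h)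
  have hT1 : ∀ w ∈ sphere 0 1, ch C f w ∉ T → ch C f w ∈ oc C g := by
    intro w hw hwT
    obtain ⟨k, hk, hkc⟩ := bdry C f w (by simpa using hw)
    obtain ⟨l, hl, hld⟩ := carrier_ex C _ k rfl _ hkc
    have hl2 : C.dim l ≤ C.dim g := by
      rcases hld with rfl | h <;> omega
    by_cases hlg : l = g
    · rw [← hlg]; exact hl
    · exact (hwT (mem_biUnion (show l ∈ {h | h ≠ g ∧ C.dim h ≤ C.dim g} from ⟨hlg, hl2⟩) (oc_sub C l hl))).elim
  have hT2 : ∀ y ∈ oc C g, y ∉ T := by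
    intro y hy hyT
    simp only [T, mem_iUnion, mem_setOf_eq] at hyT
    obtain ⟨k, ⟨hk1, hk2⟩, hk⟩ := hyT
    rcases oc_dim C hy hk with h | h
    · exact hk1 h.symm
    · omega
  have hop := (key C f g T hT hT1).1 hd
  set B : Set X := ch C f '' sphere 0 1
  have hB : IsClosed B := image_closed C f _ isClosed_sphere sphere_subset_closedBall
  have him : ∀ u, u ∈ ((chi C g ∘ ch C f) '' (sphere 0 1 ∩ ch C f ⁻¹' Tᶜ)) ↔ u ∈ ball 0 1 ∧ ch C g u ∈ B := by
    intro u
    constructor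
    · rintro ⟨x, hx, rfl⟩
      have h1 := hT1 x hx.1 hx.2
      have h2 := ch_chi C g _ (oc_sub C g h1)
      simp only [Function.comp]
      refine ⟨?_, ?_⟩
      · obtain ⟨z, hz, hzz⟩ := h1
        rw [← hzz, chi_ch C g z (ball_subset_closedBall hz)]
        exact hz
      · rw [h2]; exact ⟨x, hx.1, rfl⟩
    · rintro ⟨hu, x, hx, hxu⟩
      have : ch C f x ∈ oc C g := ⟨u, hu, hxu.symm⟩
      refine ⟨x, ⟨hx, hT2 _ this⟩, ?_⟩
      simp only [Function.comp]
      rw [hxu, chi_ch C g u (ball_subset_closedBall hu)]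
  have hop2 : IsOpen (ball 0 1 ∩ ch C g ⁻¹' Bᶜ) :=
    ((ch_cont C g).mono ball_subset_closedBall).isOpen_inter_preimage isOpen_ball hB.isOpen_compl
  have hsub : ball 0 1 ⊆ ((chi C g ∘ ch C f) '' (sphere 0 1 ∩ ch C f ⁻¹' Tᶜ)) := by
    have hpc : IsPreconnected (ball (0 : Eu (C.dim g)) 1) := (convex_ball 0 1).isPreconnected
    refine hpc.subset_left_of_subset_union hop hop2 ?_ ?_ ?_
    · rw [disjoint_left]
      intro u hu hu2
      exact hu2.2 ((him u).1 hu).2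
    · intro u hu
      by_cases h : ch C g u ∈ B
      · exact Or.inl ((him u).2 ⟨hu, h⟩)
      · exact Or.inr ⟨hu, h⟩
    · obtain ⟨u, hu, huw⟩ := hg
      refine ⟨u, hu, (him u).2 ⟨hu, ?_⟩⟩
      rw [huw]
      exact ⟨w, by simpa using hw, rfl⟩
  apply cell_sub_of_oc C g _ (cell_closed C f)
  rintro _ ⟨u, hu, rfl⟩
  obtain ⟨x, hx, hxu⟩ := ((him u).1 (hsub hu)).2
  rw [← hxu, cell_eq]
  exact ⟨x, sphere_subset_closedBall hx, rfl⟩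

theorem front : ∀ (n : ℕ) (f g : F), C.dim f = n → ∀ y ∈ oc C g, y ∈ C.cell f → C.cell g ⊆ C.cell f := by
  intro n
  induction n using Nat.strong_induction_on with
  | _ n ih =>
    intro f g hf y hy hyf
    have hyf2 := hyf
    rw [cell_eq] at hyf2
    obtain ⟨w, hw, rfl⟩ := hyf2
    have hw' : ‖w‖ ≤ 1 := by simpa using hw
    rcases hw'.lt_or_eq with hw1 | hw1
    · rw [oc_unique C hy ⟨w, by simpa using hw1, rfl⟩]
    let S' : Set X := ⋃ h ∈ {h | C.dim h + 1 = n ∧ C.cell h ⊆ C.cell f}, C.cell h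
    have hS' : IsClosed S' := (Set.toFinite _).isClosed_biUnion (fun h _ => cell_closed C h)
    by_cases hyS : ch C f w ∈ S'
    · simp only [S', mem_iUnion, mem_setOf_eq] at hyS
      obtain ⟨h, ⟨h1, h2⟩, h3⟩ := hyS
      exact (ih (C.dim h) (by omega) h g rfl _ hy h3).trans h2
    exfalso
    classical
    let Q : Finset F := Finset.univ.filter (fun g1 => ∃ w ∈ sphere (0 : Eu (C.dim f)) 1, ch C f w ∈ oc C g1 ∧ ch C f w ∉ S')
    obtain ⟨g1, hg1, hmax⟩ := Finset.exists_max_image Q C.dim ⟨g, by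
      simp only [Q, Finset.mem_filter, Finset.mem_univ, true_and]
      exact ⟨w, by simpa using hw1, hy, hyS⟩⟩
    simp only [Q, Finset.mem_filter, Finset.mem_univ, true_and] at hg1 hmax
    obtain ⟨w1, hw1s, hw1o, hw1S⟩ := hg1
    have hw1f : ch C f w1 ∈ C.cell f := by
      rw [cell_eq]; exact ⟨w1, sphere_subset_closedBall hw1s, rfl⟩
    have hlt : C.dim g1 < C.dim f := by
      obtain ⟨k, hk, hkc⟩ := bdry C f w1 (by simpa using hw1s)
      rcases oc_dim C hw1o hkc with rfl | h <;> omega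
    have hlt2 : C.dim g1 + 1 < C.dim f := by
      by_contra hcon
      have heq : C.dim g1 + 1 = C.dim f := by omega
      have := front1 C f g1 w1 (by simpa using hw1s) hw1o heq
      exact hw1S (mem_biUnion (show g1 ∈ {h | C.dim h + 1 = n ∧ C.cell h ⊆ C.cell f} from ⟨heq.trans hf, this⟩) (oc_sub C _ hw1o))
    let T : Set X := S' ∪ ⋃ h ∈ {h | h ≠ g1 ∧ C.dim h ≤ C.dim g1}, C.cell h
    have hT : IsClosed T := hS'.union ((Set.toFinite _).isClosed_biUnion (fun h _ => cell_closed C h))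
    have hk := (key C f g1 T hT ?_).2 hlt2
    · have : w1 ∈ sphere 0 1 ∩ ch C f ⁻¹' Tᶜ := by
        refine ⟨hw1s, ?_⟩
        rintro (h | h)
        · exact hw1S h
        · simp only [mem_iUnion, mem_setOf_eq] at h
          obtain ⟨k, ⟨hk1, hk2⟩, hk⟩ := h
          rcases oc_dim C hw1o hk with h | h
          · exact hk1 h.symm
          · omega
      rw [hk] at this
      exact this
    · intro w2 hw2 hw2T
      obtain ⟨l, hl⟩ := exists_carrier C (ch C f w2)
      have hl2 := hmax l ⟨w2, hw2, hl, fun h => hw2T (Or.inl h)⟩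
      by_cases hlg : l = g1
      · rw [← hlg]; exact hl
      · exact (hw2T (Or.inr (mem_biUnion (show l ∈ {h | h ≠ g1 ∧ C.dim h ≤ C.dim g1} from ⟨hlg, hl2⟩) (oc_sub C l hl)))).elim

theorem oc_face {f g : F} {y : X} (hy : y ∈ oc C g) (hyf : y ∈ C.cell f) : C.cell g ⊆ C.cell f :=
  front C _ f g rfl y hy hyf

theorem mem_real_iff {D : Finset F} (hD : C.Subcomplex D) {g : F} {y : X} (hy : y ∈ oc C g) :
    y ∈ C.real D ↔ g ∈ D := by
  constructor
  · intro h
    simp only [RegularCW.real, mem_iUnion] at h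
    obtain ⟨f, hf, hyf⟩ := h
    exact hD g f (oc_face C hy hyf) hf
  · intro h
    exact mem_biUnion h (oc_sub C g hy)

theorem zero_mem_oc (f : F) : ch C f 0 ∈ oc C f := ⟨0, by simp, rfl⟩

theorem cell_sub_dim {f g : F} (h : C.cell g ⊆ C.cell f) : g = f ∨ C.dim g < C.dim f :=
  oc_dim C (zero_mem_oc C g) (h (oc_sub C g (zero_mem_oc C g)))

theorem real_closed (D : Finset F) : IsClosed (C.real D) :=
  (Finset.finite_toSet D).isClosed_biUnion (fun h _ => cell_closed C h)
end G


section H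
variable {F X : Type} [Fintype F] [TopologicalSpace X] [T2Space X] (C : RegularCW F X)

theorem real_mono {D D' : Finset F} (h : D' ⊆ D) : C.real D' ⊆ C.real D :=
  biUnion_subset_biUnion_left h

theorem bdry_in {D D' : Finset F} (hD : C.Subcomplex D) (x : F) (hx : x ∈ D)
    (hD' : ∀ y ∈ D, C.dim y < C.dim x → y ∈ D') (w : Eu (C.dim x)) (hw : ‖w‖ = 1) :
    ch C x w ∈ C.real D' := by
  obtain ⟨g, hg⟩ := exists_carrier C (ch C x w)
  obtain ⟨k, hk, hkc⟩ := bdry C x w hw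
  have hgx : C.cell g ⊆ C.cell x := by
    apply oc_face C hg
    rw [cell_eq]
    exact ⟨w, by simp [hw], rfl⟩
  have hlt : C.dim g < C.dim x := by
    rcases oc_dim C hg hkc with rfl | h <;> omega
  exact mem_biUnion (hD' g (hD g x hgx hx) hlt) (oc_sub C g hg)

theorem chi_norm_of_not_oc (x : F) (y : X) (hy : y ∈ C.cell x) (hyo : y ∉ oc C x) : ‖chi C x y‖ = 1 := by
  have h1 := chi_mem C x y
  simp only [mem_closedBall, dist_zero_right] at h1
  rcases h1.lt_or_eq with h | h
  · exact (hyo ⟨chi C x y, by simpa using h, ch_chi C x y hy⟩).elim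
  · exact h

theorem not_oc {D' : Finset F} (hD' : C.Subcomplex D') (x : F) (hx : x ∉ D') (y : X) (hy : y ∈ C.real D') :
    y ∉ oc C x := fun h => hx ((mem_real_iff C hD' h).1 hy)

theorem real_union {D D' : Finset F} (hDD : D' ⊆ D) (x : F) (hx : x ∈ D)
    (h : ∀ y ∈ D, y ∈ D' ∨ C.cell y ⊆ C.cell x) : C.real D = C.real D' ∪ C.cell x := by
  apply subset_antisymm
  · intro z hz
    simp only [RegularCW.real, mem_iUnion] at hz
    obtain ⟨f, hf, hzf⟩ := hz
    rcases h f hf with h1 | h1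
    · exact Or.inl (mem_biUnion h1 hzf)
    · exact Or.inr (h1 hzf)
  · apply union_subset (real_mono C hDD)
    exact fun z hz => mem_biUnion hx hz

theorem T2step {D D' : Finset F} (hDD : D' ⊆ D) (x : F) (hx : x ∈ D)
    (h : ∀ y ∈ D, y ∈ D' ∨ y = x)
    {E' : Type} [NormedAddCommGroup E'] [InnerProductSpace ℝ E'] [FiniteDimensional ℝ E']
    (hfr : C.dim x < finrank ℝ E') (f : C(C.real D', sphere (0:E') 1)) :
    ∃ g : C(C.real D, sphere (0:E') 1), g.comp ⟨inclusion (real_mono C hDD), by fun_prop⟩ = f := by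
  classical
  have hR := real_union C hDD x hx (fun y hy => (h y hy).imp_right (fun h1 => by rw [h1]))
  let A : Set (Eu (C.dim x)) := closedBall 0 1 ∩ ch C x ⁻¹' (C.real D')
  have hA : IsClosed A := (ch_cont C x).preimage_isClosed_of_isClosed isClosed_closedBall (real_closed C D')
  have hcA : Continuous (fun u : A => (⟨ch C x u, u.2.2⟩ : C.real D')) := by
    apply Continuous.subtype_mk
    exact ((ch_cont C x).mono inter_subset_left).domRestrict
  obtain ⟨G, hG⟩ := ext_sphere (E := Eu (C.dim x)) (by simpa using hfr) A hA (f.comp ⟨_, hcA⟩)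
  let w : X → sphere (0:E') 1 := fun y => if hy : y ∈ C.real D' then f ⟨y, hy⟩ else G (chi C x y)
  have hw1 : ContinuousOn w (C.real D') := by
    rw [continuousOn_iff_continuous_domRestrict]
    have : (C.real D').domRestrict w = f := by
      ext1 y
      simp [w]
    rw [this]; exact f.continuous
  have hw2 : ContinuousOn w (C.cell x) := by
    apply (G.continuous.comp_continuousOn (chi_cont C x)).congr
    intro y hy
    by_cases hy' : y ∈ C.real D'
    · simp only [w, hy', dite_true, Function.comp]
      have hu : chi C x y ∈ A := ⟨chi_mem C x y, by rw [mem_preimage, ch_chi C x y hy]; exact hy'⟩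
      have := hG ⟨_, hu⟩
      simp only at this
      rw [this]
      simp [ch_chi C x y hy]
    · simp only [w, hy', dite_false, Function.comp]
  have hw : ContinuousOn w (C.real D) := by
    rw [hR]; exact hw1.union_of_isClosed hw2 (real_closed C D') (cell_closed C x)
  have hw' : Continuous (fun y : C.real D => w y) := hw.domRestrict
  refine ⟨⟨fun y => w y, hw'⟩, ?_⟩
  ext1 y
  show w y = f y
  exact dif_pos y.2

theorem T3step {D D' : Finset F} (hD : C.Subcomplex D) (hD' : C.Subcomplex D') (hDD : D' ⊆ D) (x : F) (hx : x ∈ D) (hx' : x ∉ D')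
    (h : ∀ y ∈ D, y ∈ D' ∨ y = x) [ContractibleSpace (C.real D')] :
    ∃ g : C(C.real D, sphere (0: WithLp 2 (Eu (C.dim x) × ℝ)) 1), ¬ g.Nullhomotopic := by
  classical
  have hR := real_union C hDD x hx (fun y hy => (h y hy).imp_right (fun h1 => by rw [h1]))
  have hb : ∀ w : Eu (C.dim x), ‖w‖ = 1 → ch C x w ∈ C.real D' := by
    apply bdry_in C hD x hx
    intro y hy hlt
    rcases h y hy with h | rfl
    · exact h
    · omega
  let E := Eu (C.dim x)
  let w : X → sphere (0: WithLp 2 (E × ℝ)) 1 := fun y => if y ∈ C.real D' then southPt E else dblC E ⟨chi C x y, chi_mem C x y⟩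
  have hwc : ∀ y ∈ C.cell x, w y = dblC E ⟨chi C x y, chi_mem C x y⟩ := by
    intro y hy
    by_cases hy' : y ∈ C.real D'
    · simp only [w, hy', if_true]
      rw [dblC_south]
      exact chi_norm_of_not_oc C x y hy (not_oc C hD' x hx' y hy')
    · simp only [w, hy', if_false]
  have hw1 : ContinuousOn w (C.real D') := by
    apply (continuousOn_const (c := southPt E)).congr
    intro y hy
    simp only [w, hy, if_true]
  have hw2 : ContinuousOn w (C.cell x) := by
    refine ContinuousOn.congr ?_ hwc
    apply (dblC E).continuous.comp_continuousOn
    rw [continuousOn_iff_continuous_domRestrict]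
    exact Continuous.subtype_mk (chi_cont C x).domRestrict _
  have hw : ContinuousOn w (C.real D) := by
    rw [hR]; exact hw1.union_of_isClosed hw2 (real_closed C D') (cell_closed C x)
  let b : C(sphere (0:E) 1, C.real D') := ⟨fun u => ⟨ch C x u, hb u (by simp)⟩, by
    apply Continuous.subtype_mk
    exact ((ch_cont C x).mono sphere_subset_closedBall).domRestrict⟩
  have hbn : b.Nullhomotopic := by
    have := (id_nullhomotopic (C.real D')).comp_left b
    simpa using this
  obtain ⟨K, hK⟩ := null_ext b hbn
  have hcell : ∀ u : closedBall (0:E) 1, C.charMap x u ∈ C.cell x := fun u => ⟨u, rfl⟩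
  have hcellR : ∀ u : closedBall (0:E) 1, C.charMap x u ∈ C.real D := fun u => by
    rw [hR]; exact Or.inr (hcell u)
  let φ : C(closedBall (0:E) 1, C.real D) := ⟨fun u => ⟨C.charMap x u, hcellR u⟩,
    Continuous.subtype_mk (C.continuous_charMap x) hcellR⟩
  let k : C(closedBall (0:E) 1, C.real D) := ⟨fun u => inclusion (real_mono C hDD) (K u), by fun_prop⟩
  have hw' : Continuous (fun y : C.real D => w y) := hw.domRestrict
  refine ⟨⟨fun y => w y, hw'⟩, not_null φ k ?_ _ ?_ ?_⟩
  · intro u hu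
    have := hK ⟨u, by simpa using hu⟩
    simp only at this
    ext1
    simp only [k, φ, ContinuousMap.coe_mk, coe_inclusion]
    rw [this]
    simp only [b, ContinuousMap.coe_mk]
    rw [ch_coe]
  · intro u
    show w (C.charMap x u) = _
    rw [hwc _ (hcell u)]
    congr 1
    ext1
    simp only
    rw [← ch_coe, chi_ch C x u u.2]
  · intro u
    show w (K u) = _
    exact if_pos (K u).2

set_option maxHeartbeats 1000000 in
theorem T1step {D D' : Finset F} (hD : C.Subcomplex D) (hD' : C.Subcomplex D') (s t : F) (hs : s ∈ D) (ht : t ∈ D)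
    (hDD : ∀ x, x ∈ D' ↔ x ∈ D ∧ x ≠ s ∧ x ≠ t) (hst : C.toSetup.facet s t) (hsub : D' ⊆ D) :
    ∃ r : C(C.real D, C.real D'),
      (r.comp ⟨inclusion (real_mono C hsub), by fun_prop⟩ = ContinuousMap.id _) ∧
      ((ContinuousMap.id _).Homotopic ((⟨inclusion (real_mono C hsub), by fun_prop⟩ : C(C.real D', C.real D)).comp r)) := by
  classical
  obtain ⟨hne, hcst, hdst⟩ := hst
  have hs' : s ∉ D' := fun h => ((hDD s).1 h).2.1 rfl
  have ht' : t ∉ D' := fun h => ((hDD t).1 h).2.2 rfl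
  have hR : C.real D = C.real D' ∪ C.cell t := by
    apply real_union C hsub t ht
    intro y hy
    by_cases h1 : y = s
    · right; rw [h1]; exact hcst
    by_cases h2 : y = t
    · right; rw [h2]
    · left; exact (hDD y).2 ⟨hy, h1, h2⟩
  have hbs : ∀ w : Eu (C.dim s), ‖w‖ = 1 → ch C s w ∈ C.real D' := by
    apply bdry_in C hD s hs
    intro y hy hlt
    refine (hDD y).2 ⟨hy, ?_, ?_⟩
    · rintro rfl; omega
    · rintro rfl; omega
  have hcR' := real_closed C D'
  let E := Eu (C.dim t)
  let A : Set E := closedBall 0 1 ∩ ch C t ⁻¹' (C.real D')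
  have hA : IsClosed A := (ch_cont C t).preimage_isClosed_of_isClosed isClosed_closedBall hcR'
  have hAS : A ⊆ sphere 0 1 := by
    intro u hu
    have h1 := not_oc C hD' t ht' _ hu.2
    have h2 : ‖u‖ ≤ 1 := by simpa using hu.1
    rcases h2.lt_or_eq with h | h
    · exact (h1 ⟨u, by simpa using h, rfl⟩).elim
    · simpa using h
  have hs0t : ch C s 0 ∈ C.cell t := hcst (oc_sub C s (zero_mem_oc C s))
  let p : E := chi C t (ch C s 0)
  have hp : ‖p‖ = 1 := by
    apply chi_norm_of_not_oc C t _ hs0t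
    intro h
    exact hne (oc_unique C (zero_mem_oc C s) h)
  have hpA : p ∉ A := by
    intro h
    have h1 := h.2
    simp only [p, mem_preimage] at h1
    rw [ch_chi C t _ hs0t] at h1
    exact hs' ((mem_real_iff C hD' (zero_mem_oc C s)).1 h1)
  obtain ⟨e, he, heA⟩ := retract_sphere A hA hAS p hp hpA
  have heB : ∀ x, e x ∈ closedBall (0:E) 1 := fun x => by simp [(he x).1]
  have hφe : Continuous (fun x => ch C t (e x)) := by
    have := (ch_cont C t).comp_continuous e.continuous heB
    exact this
  have hcov : ∀ x, ch C t (e x) ∈ C.real D' ∨ ch C t (e x) ∈ C.cell s := by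
    intro x
    obtain ⟨g, hg⟩ := exists_carrier C (ch C t (e x))
    have hgt : C.cell g ⊆ C.cell t := by
      apply oc_face C hg
      rw [cell_eq]; exact ⟨_, heB x, rfl⟩
    have hgD := hD g t hgt ht
    obtain ⟨k, hk, hkc⟩ := bdry C t (e x) (he x).1
    have hgt2 : g ≠ t := by
      rintro rfl
      rcases oc_dim C hg hkc with rfl | h <;> omega
    by_cases hgs : g = s
    · right; rw [← hgs]; exact oc_sub C g hg
    · left; exact mem_biUnion ((hDD g).2 ⟨hgD, hgs, hgt2⟩) (oc_sub C g hg)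
  let N : X → X := fun y => ch C s (‖chi C s y‖⁻¹ • chi C s y)
  have hchi0 : ∀ x, ch C t (e x) ∈ C.cell s → chi C s (ch C t (e x)) ≠ 0 := by
    intro x hx h0
    have h1 := ch_chi C s _ hx
    rw [h0] at h1
    apply (he x).2
    simp only [p]
    rw [h1, chi_ch C t _ (heB x)]
  let K2 : Set E := {x | ch C t (e x) ∈ C.cell s}
  have hK2 : IsClosed K2 := (cell_closed C s).preimage hφe
  let K1 : Set E := {x | ch C t (e x) ∈ C.real D'}
  have hK1 : IsClosed K1 := hcR'.preimage hφe
  let G : E → X := fun x => if ch C t (e x) ∈ C.real D' then ch C t (e x) else N (ch C t (e x))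
  have hG1 : ContinuousOn G K1 := by
    apply hφe.continuousOn.congr
    intro x hx
    exact if_pos hx
  have hnorm1 : ∀ x ∈ K2, ‖‖chi C s (ch C t (e x))‖⁻¹ • chi C s (ch C t (e x))‖ = 1 := by
    intro x hx
    rw [norm_smul, norm_inv, norm_norm, inv_mul_cancel₀ (norm_ne_zero_iff.2 (hchi0 x hx))]
  have hG2 : ContinuousOn G K2 := by
    have hcc : ContinuousOn (fun x => chi C s (ch C t (e x))) K2 :=
      (chi_cont C s).comp hφe.continuousOn (fun x hx => hx)
    have : ContinuousOn (fun x => N (ch C t (e x))) K2 := by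
      apply (ch_cont C s).comp ((hcc.norm.inv₀ (fun x hx => norm_ne_zero_iff.2 (hchi0 x hx))).smul hcc)
      intro x hx
      have := hnorm1 x hx
      simp only [mem_closedBall, dist_zero_right]
      exact this.le
    apply this.congr
    intro x hx
    by_cases hx' : ch C t (e x) ∈ C.real D'
    · simp only [G, hx', if_true, N]
      rw [chi_norm_of_not_oc C s _ hx (not_oc C hD' s hs' _ hx')]
      simp only [inv_one, one_smul]
      rw [ch_chi C s _ hx]
    · simp only [G, hx', if_false]
  have hG : Continuous G := by
    rw [← continuousOn_univ]
    have : (univ : Set E) = K1 ∪ K2 := by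
      ext x; simp only [mem_univ, true_iff]; exact hcov x
    rw [this]
    exact hG1.union_of_isClosed hG2 hK1 hK2
  have hGR : ∀ x, G x ∈ C.real D' := by
    intro x
    by_cases hx' : ch C t (e x) ∈ C.real D'
    · simp only [G, hx', if_true]
    · simp only [G, hx', if_false]
      exact hbs _ (hnorm1 x ((hcov x).resolve_left hx'))
  have hGt : ∀ x, G x ∈ C.cell t := by
    intro x
    by_cases hx' : ch C t (e x) ∈ C.real D'
    · simp only [G, hx', if_true]
      rw [cell_eq]; exact ⟨_, heB x, rfl⟩
    · simp only [G, hx', if_false]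
      apply hcst
      rw [cell_eq]
      have := hnorm1 x ((hcov x).resolve_left hx')
      exact ⟨_, by simp only [mem_closedBall, dist_zero_right]; exact this.le, rfl⟩
  let e' : E → E := fun x => chi C t (G x)
  have he' : Continuous e' := (chi_cont C t).comp_continuous hG hGt
  have he'B : ∀ x, e' x ∈ closedBall (0:E) 1 := fun x => chi_mem C t _
  have he'A : ∀ x ∈ A, e' x = x := by
    intro x hx
    have h1 : ch C t x ∈ C.real D' := hx.2
    simp only [e', G]
    rw [heA x hx, if_pos h1, chi_ch C t x hx.1]
  have he'R : ∀ x, ch C t (e' x) ∈ C.real D' := by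
    intro x
    simp only [e']
    rw [ch_chi C t _ (hGt x)]; exact hGR x
  let L : unitInterval × X → E := fun q => (1 - (q.1:ℝ)) • chi C t q.2 + (q.1:ℝ) • e' (chi C t q.2)
  have hLB : ∀ q, L q ∈ closedBall (0:E) 1 := by
    intro q
    exact (convex_closedBall (0:E) 1) (chi_mem C t _) (he'B _) (by have := q.1.2.2; linarith) q.1.2.1 (by ring)
  let h : unitInterval × X → X := fun q => if q.2 ∈ C.real D' then q.2 else ch C t (L q)
  have hh1 : ∀ q, q.2 ∈ C.real D' → h q = q.2 := fun q hq => if_pos hq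
  have hh2 : ∀ q, q.2 ∈ C.cell t → h q = ch C t (L q) := by
    intro q hq
    by_cases hq' : q.2 ∈ C.real D'
    · rw [hh1 q hq']
      have : chi C t q.2 ∈ A := ⟨chi_mem C t _, by rw [mem_preimage, ch_chi C t _ hq]; exact hq'⟩
      simp only [L]
      rw [he'A _ this, ← add_smul]
      simp only [sub_add_cancel, one_smul]
      rw [ch_chi C t _ hq]
    · exact if_neg hq'
  have hc1 : ContinuousOn h (univ ×ˢ C.real D') :=
    continuous_snd.continuousOn.congr (fun q hq => hh1 q hq.2)
  have hc2 : ContinuousOn h (univ ×ˢ C.cell t) := by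
    refine ContinuousOn.congr ?_ (fun q hq => hh2 q hq.2)
    have hcc : ContinuousOn (fun q : unitInterval × X => chi C t q.2) (univ ×ˢ C.cell t) :=
      (chi_cont C t).comp continuous_snd.continuousOn (fun q hq => hq.2)
    have hL : ContinuousOn L (univ ×ˢ C.cell t) := by
      apply ContinuousOn.add
      · exact ContinuousOn.smul (f := fun q : unitInterval × X => (1 - (q.1:ℝ))) (by fun_prop) hcc
      · exact ContinuousOn.smul (f := fun q : unitInterval × X => (q.1:ℝ)) (by fun_prop) (he'.comp_continuousOn hcc)
    exact (ch_cont C t).comp hL (fun q _ => hLB q)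
  have hc : ContinuousOn h (univ ×ˢ C.real D) := by
    rw [hR, prod_union]
    exact hc1.union_of_isClosed hc2 (isClosed_univ.prod hcR') (isClosed_univ.prod (cell_closed C t))
  have hhR : ∀ q : unitInterval × X, q.2 ∈ C.real D → h q ∈ C.real D := by
    intro q hq
    by_cases hq' : q.2 ∈ C.real D'
    · rw [hh1 q hq']; exact hq
    · have hqt : q.2 ∈ C.cell t := by
        rw [hR] at hq; exact hq.resolve_left hq'
      rw [hh2 q hqt, hR, cell_eq]
      exact Or.inr ⟨_, hLB q, rfl⟩
  have hh0 : ∀ y ∈ C.real D, h (0, y) = y := by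
    intro y hy
    by_cases hq' : y ∈ C.real D'
    · exact hh1 (0, y) hq'
    · have hqt : y ∈ C.cell t := by
        rw [hR] at hy; exact hy.resolve_left hq'
      rw [hh2 (0, y) hqt]
      simp only [L, Set.Icc.coe_zero, sub_zero, one_smul, zero_smul, add_zero]
      exact ch_chi C t _ hqt
  have hh1R : ∀ y ∈ C.real D, h (1, y) ∈ C.real D' := by
    intro y hy
    by_cases hq' : y ∈ C.real D'
    · rw [hh1 (1, y) hq']; exact hq'
    · have hqt : y ∈ C.cell t := by
        rw [hR] at hy; exact hy.resolve_left hq'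
      rw [hh2 (1, y) hqt]
      simp only [L, Set.Icc.coe_one, sub_self, one_smul, zero_smul, zero_add]
      exact he'R _
  have hcH : Continuous (fun q : unitInterval × C.real D => h (q.1, q.2)) :=
    hc.comp_continuous (by fun_prop) (fun q => ⟨mem_univ _, q.2.2⟩)
  refine ⟨⟨fun y => ⟨h (1, y), hh1R y y.2⟩, ?_⟩, ?_, ⟨⟨⟨fun q => ⟨h (q.1, q.2), hhR _ q.2.2⟩, ?_⟩, ?_, ?_⟩⟩⟩
  · apply Continuous.subtype_mk
    exact hcH.comp (by fun_prop : Continuous (fun y : C.real D => ((1 : unitInterval), y)))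
  · ext y
    simp only [ContinuousMap.comp_apply, ContinuousMap.coe_mk, coe_inclusion, ContinuousMap.id_apply]
    exact hh1 (1, (y:X)) y.2
  · exact Continuous.subtype_mk hcH _
  · intro y
    ext1
    exact hh0 y y.2
  · intro y
    ext1
    rfl
end H


section K

theorem exists_source {F : Type} (S : MorseSetup F) (Ψ Q : Finset (F × F)) (hΨ : ¬ HasClosedGradientPath S Ψ)
    (hQ : Q ⊆ Ψ) (hne : Q.Nonempty) : ∃ p ∈ Q, ∀ q ∈ Q, q.1 ≠ p.1 → ¬ S.facet p.1 q.2 := by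
  by_contra hcon
  push Not at hcon
  have : ∀ p : Q, ∃ q : Q, q.1.1 ≠ p.1.1 ∧ S.facet p.1.1 q.1.2 := by
    intro p
    obtain ⟨q, hq, h1, h2⟩ := hcon p.1 p.2
    exact ⟨⟨q, hq⟩, h1, h2⟩
  choose pr hpr using this
  obtain ⟨p0, hp0⟩ := hne
  let s : ℕ → Q := fun i => pr^[i] ⟨p0, hp0⟩
  have hs : ∀ i, s (i + 1) = pr (s i) := fun i => Function.iterate_succ_apply' _ _ _
  obtain ⟨a, b, hab, heq⟩ : ∃ a b, a < b ∧ s a = s b := by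
    obtain ⟨a, b, hab, heq⟩ := Finite.exists_ne_map_eq_of_infinite s
    rcases lt_or_gt_of_ne hab with h | h
    · exact ⟨a, b, h, heq⟩
    · exact ⟨b, a, h, heq.symm⟩
  apply hΨ
  refine ⟨b - a, fun i => (s (b - i)).1.1, fun i => (s (b - i)).1.2, by omega, ?_, ?_, ?_⟩
  · intro i _
    exact hQ (s (b - i)).2
  · intro i hi
    have h1 : b - i = (b - (i + 1)) + 1 := by omega
    have h2 := hpr (s (b - (i + 1)))
    rw [← hs, ← h1] at h2
    exact ⟨h2.1.symm, h2.2⟩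
  · have h1 : b - (b - a) = a := by omega
    simp only [h1, heq, Nat.sub_zero]

theorem morse_mono {F : Type} {S : MorseSetup F} {Ψ Ψ' : Finset (F × F)} (h : IsMorseMatching S Ψ) (hs : Ψ' ⊆ Ψ) :
    IsMorseMatching S Ψ' := by
  refine ⟨⟨fun p hp => h.1.1 p (hs hp), fun p hp q hq => h.1.2 p (hs hp) q (hs hq)⟩, ?_⟩
  rintro ⟨k, σ, T, hk, h1, h2⟩
  exact h.2 ⟨k, σ, T, hk, fun i hi => hs (h1 i hi), h2⟩

variable {F X : Type} [Fintype F] [DecidableEq F] [TopologicalSpace X] [T2Space X] (C : RegularCW F X)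

theorem sub_erase {D : Finset F} (hD : C.Subcomplex D) (x : F) (hx : ∀ y ∈ D, C.dim y ≤ C.dim x) :
    C.Subcomplex (D.erase x) := by
  intro σ τ h hτ
  rw [Finset.mem_erase] at hτ ⊢
  refine ⟨?_, hD σ τ h hτ.2⟩
  rintro rfl
  have := hx τ hτ.2
  rcases cell_sub_dim C h with h1 | h1
  · exact hτ.1 h1.symm
  · omega

theorem peel {D : Finset F} (hD : C.Subcomplex D) (Ψ : Finset (F × F)) (hΨ : IsMorseMatching C.toSetup Ψ)
    (hin : ∀ p ∈ Ψ, p.1 ∈ D ∧ p.2 ∈ D) (v : F) (hv : v ∈ D) (hv0 : C.dim v = 0) (hne : D ≠ {v}) :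
    (∃ x ∈ D, x ≠ v ∧ IsCritical Ψ x ∧ C.Subcomplex (D.erase x)) ∨
    (∃ p ∈ Ψ, C.Subcomplex ((D.erase p.1).erase p.2)) := by
  obtain ⟨m, hm, hmax⟩ := Finset.exists_max_image D C.dim ⟨v, hv⟩
  have hfd : ∀ p ∈ Ψ, p.1 ≠ p.2 ∧ C.cell p.1 ⊆ C.cell p.2 ∧ C.dim p.2 = C.dim p.1 + 1 := fun p hp => hΨ.1.1 p hp
  rcases Nat.eq_zero_or_pos (C.dim m) with h0 | hpos
  · left
    obtain ⟨x, hx, hxv⟩ : ∃ x ∈ D, x ≠ v := by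
      by_contra hcon
      push Not at hcon
      exact hne (Finset.eq_singleton_iff_unique_mem.2 ⟨hv, hcon⟩)
    refine ⟨x, hx, hxv, ?_, sub_erase C hD x ?_⟩
    · intro p hp
      have h1 := hmax p.2 (hin p hp).2
      have h2 := (hfd p hp).2.2
      omega
    · intro y hy
      have := hmax y hy
      omega
  · by_cases hc : ∃ x ∈ D, C.dim x = C.dim m ∧ ∀ p ∈ Ψ, x ≠ p.2
    · left
      obtain ⟨x, hx, hxm, hxp⟩ := hc
      refine ⟨x, hx, ?_, ?_, sub_erase C hD x (by rw [hxm]; exact hmax)⟩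
      · rintro rfl; omega
      · intro p hp
        refine ⟨?_, hxp p hp⟩
        rintro rfl
        have h1 := hmax p.2 (hin p hp).2
        have h2 := (hfd p hp).2.2
        omega
    · right
      push Not at hc
      obtain ⟨p0, hp0, hp0m⟩ := hc m hm rfl
      obtain ⟨p, hpQ, hp⟩ := exists_source C.toSetup Ψ (Ψ.filter (fun p => C.dim p.2 = C.dim m)) hΨ.2
        (Finset.filter_subset _ _) ⟨p0, Finset.mem_filter.2 ⟨hp0, by rw [← hp0m]⟩⟩
      rw [Finset.mem_filter] at hpQ
      refine ⟨p, hpQ.1, ?_⟩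
      have hpf := hfd p hpQ.1
      intro σ τ h hτ
      simp only [Finset.mem_erase] at hτ ⊢
      obtain ⟨hτ2, hτ1, hτD⟩ := hτ
      have hτm := hmax τ hτD
      refine ⟨?_, ?_, hD σ τ h hτD⟩
      · rintro rfl
        rcases cell_sub_dim C h with h1 | h1
        · exact hτ2 h1.symm
        · omega
      · rintro rfl
        rcases cell_sub_dim C h with h1 | h1
        · exact hτ1 h1.symm
        have hd : C.dim τ = C.dim m := by omega
        obtain ⟨q, hq, rfl⟩ := hc τ hτD hd
        refine hp q (Finset.mem_filter.2 ⟨hq, hd⟩) ?_ ⟨hτ1.symm, h, by omega⟩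
        intro hqp
        by_cases hqp2 : q = p
        · exact hτ2 (by rw [hqp2])
        · exact (hΨ.1.2 q hq p hpQ.1 hqp2).1 hqp

theorem main_ind (j : ℕ) : ∀ (n : ℕ) (D : Finset F), D.card = n → C.Subcomplex D → ∀ Ψ : Finset (F × F),
    IsMorseMatching C.toSetup Ψ → (∀ p ∈ Ψ, p.1 ∈ D ∧ p.2 ∈ D) → ∀ v ∈ D, C.dim v = 0 → IsCritical Ψ v →
    (∀ x ∈ D, IsCritical Ψ x → x ≠ v → C.dim x = j) →
    ((∀ x ∈ D, IsCritical Ψ x → x = v) → ContractibleSpace (C.real D)) ∧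
    ((∃ x ∈ D, IsCritical Ψ x ∧ x ≠ v) →
      ∃ f : C(C.real D, sphere (0 : WithLp 2 (Eu j × ℝ)) 1), ¬ f.Nullhomotopic) := by
  intro n
  induction n using Nat.strong_induction_on with
  | _ n ih =>
    intro D hcard hD Ψ hΨ hin v hv hv0 hvc hj
    by_cases hDv : D = {v}
    · subst hDv
      refine ⟨fun _ => ?_, ?_⟩
      · have hreal : C.real {v} = {ch C v 0} := by
          simp only [RegularCW.real, Finset.mem_singleton, iUnion_iUnion_eq_left]
          rw [cell_eq]
          have : IsEmpty (Fin (C.dim v)) := by rw [hv0]; infer_instance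
          have hss : Subsingleton (Eu (C.dim v)) := inferInstance
          have : closedBall (0 : Eu (C.dim v)) 1 = {0} := by
            ext x; simp [Subsingleton.elim x 0]
          rw [this, image_singleton]
        rw [hreal]
        infer_instance
      · rintro ⟨x, hx, -, hxv⟩
        exact (hxv (Finset.mem_singleton.1 hx)).elim
    rcases peel C hD Ψ hΨ hin v hv hv0 hDv with ⟨x, hx, hxv, hxc, hsub⟩ | ⟨p, hp, hsub⟩
    · have hss : D.erase x ⊆ D := Finset.erase_subset _ _
      have hdx := hj x hx hxc hxv
      have hor : ∀ y ∈ D, y ∈ D.erase x ∨ y = x := by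
        intro y hy
        by_cases h : y = x
        · exact Or.inr h
        · exact Or.inl (Finset.mem_erase.2 ⟨h, hy⟩)
      obtain ⟨ih1, ih2⟩ := ih (D.erase x).card (by rw [← hcard]; exact Finset.card_erase_lt_of_mem hx) _ rfl hsub Ψ hΨ
        (fun p hp => ⟨Finset.mem_erase.2 ⟨((hxc p hp).1).symm, (hin p hp).1⟩,
          Finset.mem_erase.2 ⟨((hxc p hp).2).symm, (hin p hp).2⟩⟩) v (Finset.mem_erase.2 ⟨hxv.symm, hv⟩) hv0 hvc
        (fun y hy => hj y (hss hy))
      refine ⟨fun h => (hxv (h x hx hxc)).elim, fun _ => ?_⟩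
      by_cases hoth : ∃ y ∈ D.erase x, IsCritical Ψ y ∧ y ≠ v
      · obtain ⟨f, hf⟩ := ih2 hoth
        have hfr : finrank ℝ (WithLp 2 (Eu j × ℝ)) = j + 1 := by
          rw [(WithLp.linearEquiv 2 ℝ (Eu j × ℝ)).finrank_eq]
          simp
        obtain ⟨g, hg⟩ := T2step C hss x hx hor (by rw [hfr, hdx]; omega) f
        refine ⟨g, fun hgn => hf ?_⟩
        rw [← hg]
        exact hgn.comp_left _
      · push Not at hoth
        have := ih1 hoth
        have h3 := T3step C hD hsub hss x hx (Finset.notMem_erase x D) hor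
        rw [hdx] at h3
        exact h3
    · have hmem : ∀ x, x ∈ (D.erase p.1).erase p.2 ↔ x ∈ D ∧ x ≠ p.1 ∧ x ≠ p.2 := by
        intro x; simp only [Finset.mem_erase]; tauto
      have hss : (D.erase p.1).erase p.2 ⊆ D := fun x hx => ((hmem x).1 hx).1
      have hcr : ∀ x ∈ (D.erase p.1).erase p.2, IsCritical (Ψ.erase p) x → IsCritical Ψ x := by
        intro x hx hxc q hq
        by_cases hqp : q = p
        · rw [hqp]; exact ((hmem x).1 hx).2
        · exact hxc q (Finset.mem_erase.2 ⟨hqp, hq⟩)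
      have hcr2 : ∀ x, IsCritical Ψ x → IsCritical (Ψ.erase p) x :=
        fun x hx q hq => hx q (Finset.mem_of_mem_erase hq)
      have hlt : ((D.erase p.1).erase p.2).card < n := by
        rw [← hcard]
        apply Finset.card_lt_card
        refine ⟨hss, fun h => ?_⟩
        exact ((hmem p.1).1 (h (hin p hp).1)).2.1 rfl
      obtain ⟨ih1, ih2⟩ := ih _ hlt _ rfl hsub (Ψ.erase p) (morse_mono hΨ (Finset.erase_subset _ _))
        (fun q hq => by
          have hq' := Finset.mem_erase.1 hq
          have h1 := hΨ.1.2 q hq'.2 p hp hq'.1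
          exact ⟨(hmem _).2 ⟨(hin q hq'.2).1, h1.1, h1.2.1⟩, (hmem _).2 ⟨(hin q hq'.2).2, h1.2.2.1, h1.2.2.2⟩⟩)
        v ((hmem v).2 ⟨hv, hvc p hp⟩) hv0 (hcr2 v hvc) (fun x hx hxc => hj x (hss hx) (hcr x hx hxc))
      obtain ⟨r, hr1, hr2⟩ := T1step C hD hsub p.1 p.2 (hin p hp).1 (hin p hp).2 hmem (hΨ.1.1 p hp) hss
      refine ⟨fun h => ?_, ?_⟩
      · have := ih1 (fun x hx hxc => h x (hss hx) (hcr x hx hxc))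
        rw [contractible_iff_id_nullhomotopic]
        have h1 : (ContinuousMap.id (C.real ((D.erase p.1).erase p.2))).Nullhomotopic := id_nullhomotopic _
        have h2 := (h1.comp_left r).comp_right (⟨inclusion (real_mono C hss), by fun_prop⟩ : C(C.real ((D.erase p.1).erase p.2), C.real D))
        rw [ContinuousMap.id_comp] at h2
        obtain ⟨y, hy⟩ := h2
        exact ⟨y, hr2.trans hy⟩
      · rintro ⟨x, hx, hxc, hxv⟩
        obtain ⟨f, hf⟩ := ih2 ⟨x, (hmem x).2 ⟨hx, hxc p hp⟩, hcr2 x hxc, hxv⟩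
        refine ⟨f.comp r, fun hn => hf ?_⟩
        have := hn.comp_left (⟨inclusion (real_mono C hss), by fun_prop⟩ : C(C.real ((D.erase p.1).erase p.2), C.real D))
        rw [ContinuousMap.comp_assoc, hr1, ContinuousMap.comp_id] at this
        exact this
end K


end Helpers

/-- Let `(C, D)` be an out-`j` collapsible pair with `D` nonempty. Then
`D` is contractible iff `D` is collapsible, and both are equivalent to the existence of an
out-`j` collapsing sequence for `(C, D)` with no outwardly matched faces. -/
theorem stmt2 {F X : Type} [Fintype F] [DecidableEq F] [TopologicalSpace X] [T2Space X]
    (C : RegularCW F X) (D : Finset F) (hD : C.Subcomplex D) (hDne : D.Nonempty)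
    (j : ℕ) (Φ : Finset (F × F)) (hΦ : IsOutJCollapsingSeq C.toSetup Φ D j) :
    (ContractibleSpace (C.real D) ↔
        ∃ (Ψ : Finset (F × F)) (v : F), IsCollapsingSeqOn C.toSetup Ψ D v) ∧
      (ContractibleSpace (C.real D) ↔
        ∃ Φ' : Finset (F × F), IsOutJCollapsingSeq C.toSetup Φ' D j ∧
          ∀ τ, ¬ OutwardlyMatched Φ' D τ) := by
  have hsubp : ∀ Φ' : Finset (F × F), IsMorseMatching C.toSetup Φ' → ∀ p ∈ Φ', p.2 ∈ D → p.1 ∈ D :=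
    fun Φ' h p hp h2 => hD p.1 p.2 (h.1.1 p hp).2.1 h2
  have hcrit : ∀ (Φ' : Finset (F × F)) (v : F), IsCollapsingSeq C.toSetup Φ' v → ∀ x ∈ D,
      IsCritical (Φ'.filter (fun p => p.2 ∈ D)) x → x ≠ v → OutwardlyMatched Φ' D x := by
    intro Φ' v hv x hx hxc hxv
    refine ⟨hx, ?_⟩
    have h1 : ¬ IsCritical Φ' x := fun h => hxv ((hv.2.2 x).1 h)
    unfold IsCritical at h1
    push Not at h1
    obtain ⟨p, hp, hp2⟩ := h1
    refine ⟨p, hp, ?_⟩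
    by_cases hpD : p.2 ∈ D
    · have h2 := hxc p (Finset.mem_filter.2 ⟨hp, hpD⟩)
      exact (h2.2 (hp2 h2.1)).elim
    · left
      refine ⟨?_, hpD⟩
      by_contra h
      have := hp2 (fun h' => h h'.symm)
      rw [this] at hx
      exact hpD hx
  have hvcrit : ∀ (Φ' : Finset (F × F)) (v : F), IsCollapsingSeq C.toSetup Φ' v →
      IsCritical (Φ'.filter (fun p => p.2 ∈ D)) v := by
    intro Φ' v hv p hp
    exact (hv.2.2 v).2 rfl p (Finset.mem_of_mem_filter p hp)
  have h13 : ContractibleSpace (C.real D) → ∀ τ, ¬ OutwardlyMatched Φ D τ := by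
    intro hc τ hτ
    obtain ⟨⟨v, hvD, hv⟩, hout⟩ := hΦ
    have hm := (main_ind C j _ D rfl hD (Φ.filter (fun p => p.2 ∈ D)) (morse_mono hv.1 (Finset.filter_subset _ _))
      (fun p hp => by
        rw [Finset.mem_filter] at hp
        exact ⟨hsubp Φ hv.1 p hp.1 hp.2, hp.2⟩) v hvD hv.2.1 (hvcrit Φ v hv)
      (fun x hx hxc hxv => hout x (hcrit Φ v hv x hx hxc hxv))).2
    obtain ⟨hτD, p, hp, hpp⟩ := hτ
    have hpp' : p.1 = τ ∧ p.2 ∉ D := by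
      rcases hpp with h | h
      · exact h
      · exact (h.2 (hsubp Φ hv.1 p hp (by rw [h.1]; exact hτD))).elim
    obtain ⟨f, hf⟩ := hm ⟨τ, hτD, by
      intro q hq
      rw [Finset.mem_filter] at hq
      have hqp : p ≠ q := by
        rintro rfl; exact hpp'.2 hq.2
      have := hv.1.1.2 p hp q hq.1 hqp
      rw [← hpp'.1]
      exact ⟨this.1, this.2.1⟩, by
      intro h
      exact ((hv.2.2 v).2 rfl p hp).1 (by rw [← h, hpp'.1])⟩
    apply hf
    have := (id_nullhomotopic (C.real D)).comp_right f
    rwa [ContinuousMap.comp_id] at this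
  have h32 : (∃ Φ' : Finset (F × F), IsOutJCollapsingSeq C.toSetup Φ' D j ∧ ∀ τ, ¬ OutwardlyMatched Φ' D τ) →
      ∃ (Ψ : Finset (F × F)) (v : F), IsCollapsingSeqOn C.toSetup Ψ D v := by
    rintro ⟨Φ', ⟨⟨v, hvD, hv⟩, -⟩, hno⟩
    refine ⟨Φ'.filter (fun p => p.2 ∈ D), v, morse_mono hv.1 (Finset.filter_subset _ _), hvD, hv.2.1, ?_, ?_⟩
    · intro p hp
      rw [Finset.mem_filter] at hp
      exact ⟨hsubp Φ' hv.1 p hp.1 hp.2, hp.2⟩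
    · intro x hx
      constructor
      · intro hxc
        by_contra hxv
        exact hno x (hcrit Φ' v hv x hx hxc hxv)
      · rintro rfl
        exact hvcrit Φ' x hv
  have h21 : (∃ (Ψ : Finset (F × F)) (v : F), IsCollapsingSeqOn C.toSetup Ψ D v) → ContractibleSpace (C.real D) := by
    rintro ⟨Ψ, v, hΨ, hvD, hv0, hin, hcr⟩
    exact (main_ind C j _ D rfl hD Ψ hΨ hin v hvD hv0 ((hcr v hvD).2 rfl)
      (fun x hx hxc hxv => (hxv ((hcr x hx).1 hxc)).elim)).1 (fun x hx hxc => (hcr x hx).1 hxc)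
  exact ⟨⟨fun h => h32 ⟨Φ, hΦ, h13 h⟩, h21⟩, ⟨fun h => ⟨Φ, hΦ, h13 h⟩, fun h => h21 (h32 h)⟩⟩
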